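/- arXiv:1910.11392 — 3 statements merged into one kernel-verified Lean document; each statement's English description precedes it below -/
import Mathlib

section
/- Two-dimensional moment persuasion, sufficiency: let a > 0 and let G be the distribution of posterior means induced by revealing ω₂ + aω₁, i.e. the law of x(θ) = E_{F₀}[ω | ω₂ + aω₁ = θ]. If the support of G is contained in a line {(x₁, x₂) : x₂ = a x₁ + b} for some b ∈ ℝ, then G is an optimal solution to (P_m): ∫_X x₁x₂ dG(x) ≥ ∫_X x₁x₂ dG′(x) for every G′ ∈ Δ(X) with G′ ≤_cx F₀. -/
open MeasureTheory

/-- The (topological) support of a measure: points all of whose open neighborhoods have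
positive measure. -/
def msupport {α : Type*} [TopologicalSpace α] [MeasurableSpace α] (τ : Measure α) : Set α :=
  {x | ∀ U : Set α, IsOpen U → x ∈ U → τ U ≠ 0}


lemma aux_null (τ : Measure (ℝ × ℝ)) (A : Set (ℝ × ℝ)) (h : msupport τ ⊆ A) :
    ∀ᵐ z ∂τ, z ∈ A := by
  rw [ae_iff]
  refine measure_null_of_locally_null _ ?_
  intro z hz
  have hz' : z ∉ msupport τ := fun h' => hz (h h')
  simp only [msupport, Set.mem_ofPred_eq, not_forall, not_not] at hz'
  obtain ⟨U, hU, hzU, h0⟩ := hz'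
  exact ⟨U, mem_nhdsWithin_of_mem_nhds (hU.mem_nhds hzU), h0⟩

lemma aux_int {E : Type*} [NormedAddCommGroup E] (τ : Measure (ℝ × ℝ)) [IsFiniteMeasure τ]
    (K : Set (ℝ × ℝ)) (hK : IsCompact K) (h : ∀ᵐ z ∂τ, z ∈ K) (f : ℝ × ℝ → E)
    (hf : Continuous f) : Integrable f τ := by
  have h1 : IntegrableOn f K τ := hf.continuousOn.integrableOn_compact hK
  rwa [IntegrableOn, Measure.restrict_eq_self_of_ae_mem h] at h1

/-- **Two-dimensional moment persuasion, sufficiency** (Proposition 2, "if" direction):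
let `a > 0` and let `G` be the law of the posterior mean `x = E[ω | ω₂ + aω₁]` induced by
revealing `ω₂ + aω₁`.  If the support of `G` lies in the line `{x₂ = a x₁ + b}` for some `b`,
then `G` is optimal for (P_m): it maximizes `∫ x₁ x₂ dG'` over all `G' ∈ Δ(X)` with
`G' ≤_cx F₀`. -/
theorem two_dim_revelation_optimal
    (S : Set (ℝ × ℝ)) (hScomp : IsCompact S)
    (hSpos : ∀ ω ∈ S, 0 ≤ ω.1 ∧ 0 ≤ ω.2)
    (F₀ : Measure (ℝ × ℝ)) [IsProbabilityMeasure F₀]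
    (hF₀supp : msupport F₀ = S)
    (X : Set (ℝ × ℝ)) (hX : X = convexHull ℝ S)
    (a : ℝ) (ha : 0 < a)
    (x : ℝ × ℝ → ℝ × ℝ)
    (hx : x = F₀[(fun ω : ℝ × ℝ => ω) |
      MeasurableSpace.comap (fun ω : ℝ × ℝ => ω.2 + a * ω.1) inferInstance])
    (G : Measure (ℝ × ℝ)) (hG : G = Measure.map x F₀)
    (b : ℝ) (hline : msupport G ⊆ {z : ℝ × ℝ | z.2 = a * z.1 + b}) :
    ∀ G' : Measure (ℝ × ℝ), IsProbabilityMeasure G' → G' X = 1 →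
      (∀ φ : ℝ × ℝ → ℝ, ContinuousOn φ X → ConvexOn ℝ X φ →
        ∫ z, φ z ∂G' ≤ ∫ z, φ z ∂F₀) →
      ∫ z, z.1 * z.2 ∂G' ≤ ∫ z, z.1 * z.2 ∂G := by
  intro G' hG'p hG'X hcx
  have hF : ∀ᵐ z ∂F₀, z ∈ S := aux_null F₀ S hF₀supp.subset
  have hXc : IsCompact (closure X) := by
    rw [hX]
    exact (isBounded_convexHull.2 hScomp.isBounded).isCompact_closure
  have hG'ae : ∀ᵐ z ∂G', z ∈ closure X := by
    refine (mem_ae_iff_prob_eq_one hXc.measurableSet).2 (le_antisymm prob_le_one ?_)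
    rw [← hG'X]
    exact measure_mono subset_closure
  have hGae := aux_null G _ hline
  have hθm : Measurable (fun ω : ℝ × ℝ => ω.2 + a * ω.1) := by fun_prop
  have hm := hθm.comap_le
  have hxsm : StronglyMeasurable x := by
    rw [hx]; exact stronglyMeasurable_condExp.mono hm
  have hxm : Measurable x := hxsm.measurable
  have hid : Integrable (fun ω : ℝ × ℝ => ω) F₀ := aux_int F₀ S hScomp hF _ continuous_id
  have hxi : Integrable x F₀ := by rw [hx]; exact integrable_condExp
  have hxline : ∀ᵐ ω ∂F₀, (x ω).2 = a * (x ω).1 + b := by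
    rw [hG] at hGae
    exact ae_of_ae_map hxm.aemeasurable hGae
  have hxθ : ∀ᵐ ω ∂F₀, (x ω).2 + a * (x ω).1 = ω.2 + a * ω.1 := by
    let T : ℝ × ℝ →L[ℝ] ℝ := ContinuousLinearMap.snd ℝ ℝ ℝ + a • ContinuousLinearMap.fst ℝ ℝ ℝ
    have h1 := T.comp_condExp_comm
      (m := MeasurableSpace.comap (fun ω : ℝ × ℝ => ω.2 + a * ω.1) inferInstance) hid
    rw [← hx] at h1
    have h2 : F₀[(T ∘ fun ω : ℝ × ℝ => ω) |
        MeasurableSpace.comap (fun ω : ℝ × ℝ => ω.2 + a * ω.1) inferInstance]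
        = T ∘ fun ω : ℝ × ℝ => ω := by
      refine condExp_of_stronglyMeasurable hm ?_ (T.integrable_comp hid)
      refine Measurable.stronglyMeasurable ?_
      exact comap_measurable (fun ω : ℝ × ℝ => ω.2 + a * ω.1)
    rw [h2] at h1
    filter_upwards [h1] with ω hω
    simpa [T] using hω
  have hmean : ∫ ω, (ω.2 - a * ω.1) ∂F₀ = b := by
    let T : ℝ × ℝ →L[ℝ] ℝ := ContinuousLinearMap.snd ℝ ℝ ℝ - a • ContinuousLinearMap.fst ℝ ℝ ℝ
    have h0 : ∫ ω, x ω ∂F₀ = ∫ ω, ω ∂F₀ := by rw [hx]; exact integral_condExp hm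
    have h1 := T.integral_comp_comm hid
    have h2 := T.integral_comp_comm hxi
    have h3 : ∫ ω, T (x ω) ∂F₀ = ∫ ω, b ∂F₀ := by
      refine integral_congr_ae ?_
      filter_upwards [hxline] with ω hω
      simp [T, hω]
    rw [h3, h0, ← h1] at h2
    simp [T] at h2
    exact h2.symm
  have hGint : ∫ z, z.1 * z.2 ∂G = ∫ ω, ((ω.2 + a * ω.1) ^ 2 - b ^ 2) / (4 * a) ∂F₀ := by
    rw [hG, integral_map hxm.aemeasurable (by fun_prop)]
    refine integral_congr_ae ?_
    filter_upwards [hxline, hxθ] with ω h1 h2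
    rw [← h2, h1]
    field_simp
    ring
  let φ : ℝ × ℝ → ℝ := fun z => ((z.2 + a * z.1) ^ 2 - 2 * b * (z.2 - a * z.1) + b ^ 2) / (4 * a)
  have hφc : Continuous φ := by fun_prop
  have hφconv : ConvexOn ℝ X φ := by
    refine ⟨hX ▸ convex_convexHull ℝ S, ?_⟩
    intro p _ q _ s t hs ht hst
    simp only [φ, smul_eq_mul, Prod.fst_add, Prod.snd_add, Prod.smul_fst, Prod.smul_snd]
    rw [← mul_div_assoc, ← mul_div_assoc, ← add_div]
    refine div_le_div_of_nonneg_right ?_ (by positivity)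
    obtain rfl : t = 1 - s := by linarith
    nlinarith [mul_nonneg (mul_nonneg hs ht) (sq_nonneg ((p.2 + a * p.1) - (q.2 + a * q.1)))]
  calc ∫ z, z.1 * z.2 ∂G' ≤ ∫ z, φ z ∂G' := by
        refine integral_mono (aux_int G' (closure X) hXc hG'ae _ (by fun_prop))
          (aux_int G' (closure X) hXc hG'ae _ hφc) ?_
        intro z
        simp only [φ]
        rw [le_div_iff₀ (by positivity)]
        nlinarith [sq_nonneg (z.2 - a * z.1 - b)]
    _ ≤ ∫ z, φ z ∂F₀ := hcx φ hφc.continuousOn hφconv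
    _ = ∫ z, z.1 * z.2 ∂G := by
        rw [hGint]
        have i1 : Integrable (fun ω : ℝ × ℝ => ((ω.2 + a * ω.1) ^ 2 - b ^ 2) / (4 * a)) F₀ :=
          aux_int F₀ S hScomp hF _ (by fun_prop)
        have i2 : Integrable (fun ω : ℝ × ℝ => ω.2 - a * ω.1) F₀ :=
          aux_int F₀ S hScomp hF _ (by fun_prop)
        have e : φ = fun ω => ((ω.2 + a * ω.1) ^ 2 - b ^ 2) / (4 * a)
            - (2 * b / (4 * a)) * ((ω.2 - a * ω.1) - b) := by
          funext ω
          simp only [φ]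
          field_simp
          ring
        have i3 : Integrable (fun ω : ℝ × ℝ => (2 * b / (4 * a)) * ((ω.2 - a * ω.1) - b)) F₀ :=
          aux_int F₀ S hScomp hF _ (by fun_prop)
        rw [e, integral_sub i1 i3, integral_const_mul,
          integral_sub i2 (integrable_const b), hmean]
        simp
end

section
/- Two-dimensional moment persuasion, necessity: assume in addition that Ω is convex with non-empty interior. Let a > 0 and let G be the distribution of posterior means induced by revealing ω₂ + aω₁, i.e. the law of x(θ) = E_{F₀}[ω | ω₂ + aω₁ = θ]. If G is an optimal solution to (P_m), then the support of G is contained in a line {(x₁, x₂) : x₂ = a x₁ + b} for some b ∈ ℝ. -/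
open MeasureTheory

/-- Posterior mean (barycenter of the conditional kernel) of a joint law of (signal, state). -/
noncomputable def bary (ρ : Measure ((ℝ × ℝ) × (ℝ × ℝ))) [IsFiniteMeasure ρ] (σ : ℝ × ℝ) : ℝ × ℝ :=
  ∫ w, w ∂(ρ.condKernel σ)

lemma measurable_bary (ρ : Measure ((ℝ × ℝ) × (ℝ × ℝ))) [IsFiniteMeasure ρ] :
    Measurable (bary ρ) := by
  have h : StronglyMeasurable (fun w : ℝ × ℝ => w) := measurable_id.stronglyMeasurable
  exact (StronglyMeasurable.integral_kernel (κ := ρ.condKernel) h).measurable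

lemma ae_snd_mem (ρ : Measure ((ℝ × ℝ) × (ℝ × ℝ))) {S : Set (ℝ × ℝ)}
    (hS : MeasurableSet S) (h0 : ρ.snd Sᶜ = 0) : ∀ᵐ p ∂ρ, p.2 ∈ S := by
  rw [Measure.snd_apply hS.compl] at h0
  exact h0

lemma ae_ae_mem (ρ : Measure ((ℝ × ℝ) × (ℝ × ℝ))) [IsProbabilityMeasure ρ] {S : Set (ℝ × ℝ)}
    (hS : MeasurableSet S) (h0 : ρ.snd Sᶜ = 0) :
    ∀ᵐ σ ∂ρ.fst, ∀ᵐ w ∂(ρ.condKernel σ), w ∈ S := by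
  have h := ae_snd_mem ρ hS h0
  rw [← ρ.disintegrate ρ.condKernel] at h
  exact Measure.ae_ae_of_ae_compProd h

lemma integrable_of_ae_mem (ν : Measure (ℝ × ℝ)) [IsFiniteMeasure ν] {S : Set (ℝ × ℝ)}
    (hS : IsCompact S) (h : ∀ᵐ w ∂ν, w ∈ S) : Integrable (fun w : ℝ × ℝ => w) ν := by
  obtain ⟨C, hC⟩ := hS.isBounded.exists_norm_le
  refine Integrable.of_bound measurable_id.aestronglyMeasurable C ?_
  filter_upwards [h] with w hw using hC w hw

lemma bary_mem (ρ : Measure ((ℝ × ℝ) × (ℝ × ℝ))) [IsProbabilityMeasure ρ] {S : Set (ℝ × ℝ)}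
    (hS : IsCompact S) (hconv : Convex ℝ S) (h0 : ρ.snd Sᶜ = 0) :
    ∀ᵐ σ ∂ρ.fst, bary ρ σ ∈ S := by
  filter_upwards [ae_ae_mem ρ hS.measurableSet h0] with σ hσ
  exact hconv.integral_mem hS.isClosed hσ (integrable_of_ae_mem _ hS hσ)

lemma bary_convex (ρ : Measure ((ℝ × ℝ) × (ℝ × ℝ))) [IsProbabilityMeasure ρ] {S : Set (ℝ × ℝ)}
    (hS : IsCompact S) (hconv : Convex ℝ S) (h0 : ρ.snd Sᶜ = 0) (φ : ℝ × ℝ → ℝ)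
    (hφ : ContinuousOn φ S) (hφc : ConvexOn ℝ S φ) :
    ∫ z, φ z ∂(ρ.fst.map (bary ρ)) ≤ ∫ z, φ z ∂ρ.snd := by
  classical
  have hSm := hS.measurableSet
  set f : ℝ × ℝ → ℝ := S.indicator φ with hf
  have hfm : Measurable f := by
    have : Measurable (S.piecewise φ 0) := by
      refine hφ.measurable_piecewise continuousOn_const hSm
    rwa [Set.piecewise_eq_indicator] at this
  have hfS : ∀ w ∈ S, f w = φ w := fun w hw => Set.indicator_of_mem hw φ
  obtain ⟨C, hC⟩ := (hS.image_of_continuousOn hφ).isBounded.exists_norm_le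
  have hC' : ∀ w, ‖f w‖ ≤ max C 0 := by
    intro w
    by_cases hw : w ∈ S
    · rw [hfS w hw]; exact le_max_of_le_left (hC _ ⟨w, hw, rfl⟩)
    · simp [hf, hw]
  have hmem := bary_mem ρ hS hconv h0
  have e1 : ∫ z, φ z ∂(ρ.fst.map (bary ρ)) = ∫ σ, f (bary ρ σ) ∂ρ.fst := by
    rw [← integral_map (measurable_bary ρ).aemeasurable hfm.aestronglyMeasurable]
    apply integral_congr_ae
    have : ∀ᵐ z ∂(ρ.fst.map (bary ρ)), z ∈ S := by
      exact (ae_map_iff (p := fun z => z ∈ S) (measurable_bary ρ).aemeasurable hSm).2 hmem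
    filter_upwards [this] with z hz using (hfS z hz).symm
  have e2 : ∫ z, φ z ∂ρ.snd = ∫ p, f p.2 ∂ρ := by
    rw [Measure.snd, ← integral_map measurable_snd.aemeasurable hfm.aestronglyMeasurable]
    apply integral_congr_ae
    have : ∀ᵐ z ∂ρ.snd, z ∈ S := h0
    filter_upwards [this] with z hz using (hfS z hz).symm
  have hInteg : Integrable (fun p : (ℝ × ℝ) × (ℝ × ℝ) => f p.2) ρ :=
    Integrable.of_bound (hfm.comp measurable_snd).aestronglyMeasurable _
      (Filter.Eventually.of_forall fun p => hC' p.2)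
  have e3 := Measure.integral_condKernel hInteg
  rw [e1, e2, ← e3]
  refine integral_mono_ae ?_ hInteg.integral_condKernel ?_
  · exact Integrable.of_bound (hfm.comp (measurable_bary ρ)).aestronglyMeasurable _
      (Filter.Eventually.of_forall fun p => hC' _)
  · filter_upwards [ae_ae_mem ρ hSm h0] with σ hσ
    refine ConvexOn.map_integral_le (s := S) (f := fun w => w) (g := f) (μ := ρ.condKernel σ)
      (hφc.congr fun w hw => (hfS w hw).symm)
      (hφ.congr hfS) hS.isClosed hσ (integrable_of_ae_mem _ hS hσ) ?_
    exact Integrable.of_bound hfm.aestronglyMeasurable _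
      (Filter.Eventually.of_forall fun p => hC' _)

lemma bary_integral (ρ : Measure ((ℝ × ℝ) × (ℝ × ℝ))) [IsProbabilityMeasure ρ] {S : Set (ℝ × ℝ)}
    (hS : IsCompact S) (h0 : ρ.snd Sᶜ = 0) (L : ℝ × ℝ →L[ℝ] ℝ) (g : ℝ × ℝ → ℝ)
    (hg : Measurable g) (C : ℝ) (hC : ∀ᵐ σ ∂ρ.fst, |g σ| ≤ C) :
    ∫ σ, g σ * L (bary ρ σ) ∂ρ.fst = ∫ p, g p.1 * L p.2 ∂ρ := by
  obtain ⟨K, hK⟩ := hS.isBounded.exists_norm_le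
  have hC1 : ∀ᵐ p ∂ρ, |g p.1| ≤ C := by
    rw [Measure.fst, ae_map_iff measurable_fst.aemeasurable] at hC
    · exact hC
    · exact measurableSet_le hg.abs measurable_const
  have hInteg : Integrable (fun p : (ℝ × ℝ) × (ℝ × ℝ) => g p.1 * L p.2) ρ := by
    refine Integrable.of_bound (C := C * (‖L‖ * K)) (by fun_prop) ?_
    filter_upwards [ae_snd_mem ρ hS.measurableSet h0, hC1] with p hp h1
    rw [norm_mul]
    have h2 : ‖L p.2‖ ≤ ‖L‖ * K := (L.le_opNorm _).trans
      (mul_le_mul_of_nonneg_left (hK _ hp) (norm_nonneg _))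
    exact mul_le_mul h1 h2 (norm_nonneg _) ((abs_nonneg _).trans h1)
  rw [← Measure.integral_condKernel hInteg]
  apply integral_congr_ae
  filter_upwards [ae_ae_mem ρ hS.measurableSet h0] with σ hσ
  rw [integral_const_mul, L.integral_comp_comm (integrable_of_ae_mem _ hS hσ)]
  rfl

/-- The first-order integrand. -/
def psi (p : (ℝ × ℝ) × (ℝ × ℝ)) : ℝ := p.1.1 * p.2.2 + p.1.2 * p.2.1 - p.1.1 * p.1.2

lemma continuous_psi : Continuous psi := by unfold psi; fun_prop

/-- The perturbed joint law. -/
noncomputable def pert (T N : Measure ((ℝ × ℝ) × (ℝ × ℝ))) (A : Set ((ℝ × ℝ) × (ℝ × ℝ)))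
    (e e' : NNReal) : Measure ((ℝ × ℝ) × (ℝ × ℝ)) :=
  T.restrict Aᶜ + (e' • T.restrict A + e • N)

lemma pert_snd (T N : Measure ((ℝ × ℝ) × (ℝ × ℝ))) (A : Set ((ℝ × ℝ) × (ℝ × ℝ)))
    (hA : MeasurableSet A) (hN : N.snd = (T.restrict A).snd) (e e' : NNReal) (he : e' + e = 1) :
    (pert T N A e e').snd = T.snd := by
  have hT : T = T.restrict Aᶜ + T.restrict A := by
    rw [add_comm]; exact (Measure.restrict_add_restrict_compl hA).symm
  conv_rhs => rw [hT]
  unfold pert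
  simp only [Measure.snd] at hN ⊢
  rw [Measure.map_add _ _ measurable_snd, Measure.map_add _ _ measurable_snd,
    Measure.map_add _ _ measurable_snd, Measure.map_smul, Measure.map_smul, hN, ← add_smul, he,
    one_smul]

lemma pert_integral (T N : Measure ((ℝ × ℝ) × (ℝ × ℝ)))
    (A : Set ((ℝ × ℝ) × (ℝ × ℝ)))
    (hA : MeasurableSet A) (e e' : NNReal) (he : e' + e = 1) (f : (ℝ × ℝ) × (ℝ × ℝ) → ℝ)
    (hT : Integrable f T) (hN : Integrable f N) :
    Integrable f (pert T N A e e') ∧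
    ∫ p, f p ∂(pert T N A e e') = ∫ p, f p ∂T - e * ∫ p in A, f p ∂T + e * ∫ p, f p ∂N := by
  unfold pert
  have i1 : Integrable f (T.restrict Aᶜ) := hT.restrict
  have i2 : Integrable f (e' • T.restrict A) := hT.restrict.smul_measure_nnreal
  have i3 : Integrable f (e • N) := hN.smul_measure_nnreal
  refine ⟨i1.add_measure (i2.add_measure i3), ?_⟩
  rw [integral_add_measure i1 (i2.add_measure i3), integral_add_measure i2 i3,
    integral_smul_nnreal_measure, integral_smul_nnreal_measure,
    ← integral_add_compl hA hT]
  have : (e' : ℝ) = 1 - e := by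
    have := congrArg (fun t : NNReal => (t : ℝ)) he
    push_cast at this; linarith
  simp only [NNReal.smul_def, smul_eq_mul, this]
  ring

lemma pert_ae (T N : Measure ((ℝ × ℝ) × (ℝ × ℝ))) (A : Set ((ℝ × ℝ) × (ℝ × ℝ)))
    (e e' : NNReal) (P : (ℝ × ℝ) × (ℝ × ℝ) → Prop) (hT : ∀ᵐ p ∂T, P p) (hN : ∀ᵐ p ∂N, P p) :
    ∀ᵐ p ∂(pert T N A e e'), P p := by
  unfold pert
  rw [ae_add_measure_iff, ae_add_measure_iff]
  exact ⟨ae_restrict_of_ae hT, Measure.ae_smul_measure (ae_restrict_of_ae hT) _,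
    Measure.ae_smul_measure hN _⟩

lemma pert_ae_rev (T N : Measure ((ℝ × ℝ) × (ℝ × ℝ))) (A : Set ((ℝ × ℝ) × (ℝ × ℝ)))
    (hA : MeasurableSet A)
    (e e' : NNReal) (he : e' ≠ 0) (P : (ℝ × ℝ) × (ℝ × ℝ) → Prop)
    (h : ∀ᵐ p ∂(pert T N A e e'), P p) : ∀ᵐ p ∂T, P p := by
  unfold pert at h
  rw [ae_add_measure_iff, ae_add_measure_iff] at h
  have h2 : ∀ᵐ p ∂(T.restrict A), P p := by
    have h2 := h.2.1
    rw [ae_iff] at h2 ⊢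
    rw [Measure.smul_apply] at h2
    simpa [he] using h2
  rw [← Measure.restrict_add_restrict_compl (μ := T) hA, ae_add_measure_iff]
  exact ⟨h2, h.1⟩

lemma second_order (S : Set (ℝ × ℝ)) (hS : IsCompact S) (hconv : Convex ℝ S)
    (T : Measure ((ℝ × ℝ) × (ℝ × ℝ))) [IsProbabilityMeasure T] (hTS : T.snd Sᶜ = 0)
    (M : ℝ) (hSM : ∀ w ∈ S, ‖w‖ ≤ M) (hTM : ∀ᵐ p ∂T, ‖p.1‖ ≤ M)
    (L : ℝ × ℝ →L[ℝ] ℝ) (hL : ∀ z, |L z| ≤ ‖z‖)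
    (hmart : ∀ g : ℝ × ℝ → ℝ, Measurable g → ∀ C : ℝ, (∀ᵐ p ∂T, |g p.1| ≤ C) →
      ∫ p, g p.1 * (L p.2 - L p.1) ∂T = 0)
    (A : Set ((ℝ × ℝ) × (ℝ × ℝ))) (hA : MeasurableSet A)
    (N : Measure ((ℝ × ℝ) × (ℝ × ℝ))) [IsFiniteMeasure N]
    (hN : N.snd = (T.restrict A).snd) (c : NNReal) (hNc : N.fst ≤ c • T.fst)
    (e e' : NNReal) (he : e' + e = 1) (he2 : e ≤ 1/2)
    [IsProbabilityMeasure (pert T N A e e')] :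
    Integrable (fun p => (L (bary (pert T N A e e') p.1) - L p.1) ^ 2) (pert T N A e e') ∧
    ∫ p, (L (bary (pert T N A e e') p.1) - L p.1) ^ 2 ∂(pert T N A e e') ≤
      (4 * M * (1 + c)) ^ 2 * e ^ 2 := by
  set Q := pert T N A e e' with hR
  have her : (e : ℝ) ≤ 1 / 2 := by exact_mod_cast he2
  have he' : e' ≠ 0 := by
    rintro rfl
    rw [zero_add] at he
    rw [he] at he2
    have h3 : ((1 : NNReal) : ℝ) ≤ 1 / 2 := by exact_mod_cast he2
    norm_num at h3
  have hRS : Q.snd = T.snd := pert_snd T N A hA hN e e' he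
  have hRS0 : Q.snd Sᶜ = 0 := by rw [hRS, hTS]
  have hTm : ∀ᵐ p ∂T, ‖p.1‖ ≤ M ∧ ‖p.2‖ ≤ M := by
    filter_upwards [hTM, ae_snd_mem T hS.measurableSet hTS] with p h1 h2 using ⟨h1, hSM _ h2⟩
  have hM : 0 ≤ M := by
    obtain ⟨p, hp⟩ := hTm.exists
    exact (norm_nonneg _).trans hp.1
  set d : ℝ × ℝ → ℝ := fun σ => L (bary Q σ) - L σ with hd
  have hdm : Measurable d := by
    have := measurable_bary Q
    exact (L.measurable.comp this).sub L.measurable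
  -- transfer of a.e. statements from T.fst to N
  have hfstN : ∀ P : ℝ × ℝ → Prop, MeasurableSet {z | P z} → (∀ᵐ p ∂T, P p.1) →
      ∀ᵐ p ∂N, P p.1 := by
    intro P hP h
    have h1 : ∀ᵐ z ∂T.fst, P z := (ae_map_iff measurable_fst.aemeasurable hP).2 h
    have h2 : ∀ᵐ z ∂N.fst, P z := by
      have : ∀ᵐ z ∂(c • T.fst), P z := Measure.ae_smul_measure h1 c
      exact (Measure.absolutelyContinuous_of_le hNc).ae_le this
    exact (ae_map_iff measurable_fst.aemeasurable hP).1 h2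
  have hNm : ∀ᵐ p ∂N, ‖p.1‖ ≤ M ∧ ‖p.2‖ ≤ M := by
    have h1 := hfstN (fun z => ‖z‖ ≤ M) (measurableSet_le measurable_norm measurable_const) hTM
    have h2 : ∀ᵐ p ∂N, p.2 ∈ S := by
      refine ae_snd_mem N hS.measurableSet ?_
      rw [hN, Measure.snd_apply hS.measurableSet.compl]
      rw [Measure.snd_apply hS.measurableSet.compl] at hTS
      exact le_antisymm ((Measure.restrict_apply_le _ _).trans hTS.le) bot_le
    filter_upwards [h1, h2] with p h1 h2 using ⟨h1, hSM _ h2⟩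
  have hRm : ∀ᵐ p ∂Q, ‖p.1‖ ≤ M ∧ ‖p.2‖ ≤ M := pert_ae T N A e e' _ hTm hNm
  have hdR : ∀ᵐ p ∂Q, |d p.1| ≤ 2 * M := by
    have h1 : ∀ᵐ p ∂Q, bary Q p.1 ∈ S :=
      (ae_map_iff (p := fun z => bary Q z ∈ S) measurable_fst.aemeasurable
        ((measurable_bary Q) hS.measurableSet)).1 (bary_mem Q hS hconv hRS0)
    filter_upwards [h1, hRm] with p h1 h2
    have h3 := (hL (bary Q p.1)).trans (hSM _ h1)
    have h4 := (hL p.1).trans h2.1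
    calc |d p.1| ≤ |L (bary Q p.1)| + |L p.1| := abs_sub _ _
      _ ≤ 2 * M := by linarith
  have hdT : ∀ᵐ p ∂T, |d p.1| ≤ 2 * M := pert_ae_rev T N A hA e e' he' _ hdR
  have hdN : ∀ᵐ p ∂N, |d p.1| ≤ 2 * M :=
    hfstN (fun z => |d z| ≤ 2 * M) (measurableSet_le hdm.abs measurable_const) hdT
  have hdm1 : Measurable (fun p : (ℝ × ℝ) × (ℝ × ℝ) => d p.1) := hdm.comp measurable_fst
  have hsub : ∀ p : (ℝ × ℝ) × (ℝ × ℝ), ‖p.1‖ ≤ M ∧ ‖p.2‖ ≤ M → |L p.2 - L p.1| ≤ 2 * M := by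
    intro p hp
    have h3 := (hL p.1).trans hp.1
    have h4 := (hL p.2).trans hp.2
    calc |L p.2 - L p.1| ≤ |L p.2| + |L p.1| := abs_sub _ _
      _ ≤ 2 * M := by linarith
  -- the cross term
  set f : (ℝ × ℝ) × (ℝ × ℝ) → ℝ := fun p => d p.1 * (L p.2 - L p.1) with hf
  have hfm : Measurable f := by
    refine hdm1.mul ?_
    exact (L.measurable.comp measurable_snd).sub (L.measurable.comp measurable_fst)
  have hfle : ∀ p : (ℝ × ℝ) × (ℝ × ℝ), ‖p.1‖ ≤ M ∧ ‖p.2‖ ≤ M → |f p| ≤ 2 * M * |d p.1| := by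
    intro p hp
    rw [hf]; simp only [abs_mul]
    rw [mul_comm]
    exact mul_le_mul_of_nonneg_right (hsub p hp) (abs_nonneg _)
  have hInteg : ∀ (ν : Measure ((ℝ × ℝ) × (ℝ × ℝ))) [IsFiniteMeasure ν],
      (∀ᵐ p ∂ν, ‖p.1‖ ≤ M ∧ ‖p.2‖ ≤ M) → (∀ᵐ p ∂ν, |d p.1| ≤ 2 * M) →
      Integrable f ν ∧ Integrable (fun p => |d p.1|) ν ∧ Integrable (fun p => d p.1 ^ 2) ν ∧
      Integrable (fun p => d p.1 * L p.1) ν ∧ Integrable (fun p => d p.1 * L p.2) ν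
      ∧ Integrable (fun p => d p.1 * L (bary Q p.1)) ν := by
    intro ν _ h1 h2
    have j3 : Integrable (fun p => d p.1 ^ 2) ν := by
      refine Integrable.of_bound (hdm1.pow_const 2).aestronglyMeasurable ((2 * M) ^ 2) ?_
      filter_upwards [h2] with p h2
      rw [Real.norm_eq_abs, abs_pow]
      exact pow_le_pow_left₀ (abs_nonneg _) h2 2
    have j4 : Integrable (fun p => d p.1 * L p.1) ν := by
      refine Integrable.of_bound (hdm1.mul (L.measurable.comp measurable_fst)).aestronglyMeasurable
        (2 * M * M) ?_
      filter_upwards [h1, h2] with p h1 h2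
      rw [norm_mul]
      exact mul_le_mul h2 ((hL _).trans h1.1) (norm_nonneg _) (by positivity)
    refine ⟨?_, ?_, j3, j4, ?_, ?_⟩
    · refine Integrable.of_bound hfm.aestronglyMeasurable (2 * M * (2 * M)) ?_
      filter_upwards [h1, h2] with p h1 h2
      exact (hfle p h1).trans (mul_le_mul_of_nonneg_left h2 (by positivity))
    · refine Integrable.of_bound hdm1.abs.aestronglyMeasurable (2 * M) ?_
      filter_upwards [h2] with p h2
      simpa using h2
    · refine Integrable.of_bound (hdm1.mul (L.measurable.comp measurable_snd)).aestronglyMeasurable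
        (2 * M * M) ?_
      filter_upwards [h1, h2] with p h1 h2
      rw [norm_mul]
      exact mul_le_mul h2 ((hL _).trans h1.2) (norm_nonneg _) (by positivity)
    · refine (j3.add j4).congr (Filter.Eventually.of_forall fun p => ?_)
      simp only [hd, Pi.add_apply]; ring
  obtain ⟨iT1, iT2, iT3, iT4, iT5, iT6⟩ := hInteg T hTm hdT
  obtain ⟨iN1, iN2, iN3, iN4, iN5, iN6⟩ := hInteg N hNm hdN
  obtain ⟨iR1, iR2, iR3, iR4, iR5, iR6⟩ := hInteg Q hRm hdR
  refine ⟨iR3, ?_⟩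
  change ∫ p, d p.1 ^ 2 ∂Q ≤ _
  have hdR' : ∀ᵐ σ ∂Q.fst, |d σ| ≤ 2 * M :=
    (ae_map_iff measurable_fst.aemeasurable (measurableSet_le hdm.abs measurable_const)).2 hdR
  have k1 : ∫ p, d p.1 ^ 2 ∂Q = ∫ p, f p ∂Q := by
    have b := bary_integral Q hS hRS0 L d hdm (2 * M) hdR'
    rw [Measure.fst, integral_map measurable_fst.aemeasurable] at b
    · have : ∫ p, d p.1 ^ 2 ∂Q = ∫ p, d p.1 * L (bary Q p.1) ∂Q - ∫ p, d p.1 * L p.1 ∂Q := by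
        rw [← integral_sub iR6 iR4]
        congr 1; ext p; simp only [hd]; ring
      rw [this, b, ← integral_sub iR5 iR4]
      congr 1; ext p; simp only [hf]; ring
    · exact (hdm.mul (L.measurable.comp (measurable_bary Q))).aestronglyMeasurable
  have k2 := (pert_integral T N A hA e e' he f iT1 iN1).2
  have k3 : ∫ p, f p ∂T = 0 := hmart d hdm (2 * M) hdT
  have k4 : |∫ p in A, f p ∂T| ≤ 2 * M * ∫ p, |d p.1| ∂T := by
    calc |∫ p in A, f p ∂T| ≤ ∫ p in A, |f p| ∂T := abs_integral_le_integral_abs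
      _ ≤ ∫ p, |f p| ∂T := setIntegral_le_integral iT1.abs
          (Filter.Eventually.of_forall fun p => abs_nonneg _)
      _ ≤ ∫ p, 2 * M * |d p.1| ∂T := by
          refine integral_mono_ae iT1.abs (iT2.const_mul _) ?_
          filter_upwards [hTm] with p hp using hfle p hp
      _ = _ := integral_const_mul _ _
  have k5 : |∫ p, f p ∂N| ≤ 2 * M * (c * ∫ p, |d p.1| ∂T) := by
    have iTf : Integrable (fun z => |d z|) T.fst :=
      (integrable_map_measure hdm.abs.aestronglyMeasurable measurable_fst.aemeasurable).2 iT2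
    calc |∫ p, f p ∂N| ≤ ∫ p, |f p| ∂N := abs_integral_le_integral_abs
      _ ≤ ∫ p, 2 * M * |d p.1| ∂N := by
          refine integral_mono_ae iN1.abs (iN2.const_mul _) ?_
          filter_upwards [hNm] with p hp using hfle p hp
      _ = 2 * M * ∫ p, |d p.1| ∂N := integral_const_mul _ _
      _ = 2 * M * ∫ z, |d z| ∂N.fst := by
          rw [Measure.fst, integral_map measurable_fst.aemeasurable hdm.abs.aestronglyMeasurable]
      _ ≤ 2 * M * ∫ z, |d z| ∂(c • T.fst) := by
          refine mul_le_mul_of_nonneg_left ?_ (by positivity)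
          exact integral_mono_measure hNc (Filter.Eventually.of_forall fun p => abs_nonneg _)
            iTf.smul_measure_nnreal
      _ = _ := by
          rw [integral_smul_nnreal_measure, Measure.fst,
            integral_map measurable_fst.aemeasurable hdm.abs.aestronglyMeasurable]
          rfl
  have k6 : ∫ p, |d p.1| ∂T ≤ 2 * ∫ p, |d p.1| ∂Q := by
    have h1 := (pert_integral T N A hA e e' he _ iT2 iN2).2
    have h2 : 0 ≤ ∫ p, |d p.1| ∂N := integral_nonneg fun p => abs_nonneg _
    have h3 : ∫ p in A, |d p.1| ∂T ≤ ∫ p, |d p.1| ∂T := setIntegral_le_integral iT2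
          (Filter.Eventually.of_forall fun p => abs_nonneg _)
    have h4 : 0 ≤ ∫ p, |d p.1| ∂T := integral_nonneg fun p => abs_nonneg _
    have h5 : (e : ℝ) * ∫ p in A, |d p.1| ∂T ≤ 1 / 2 * ∫ p, |d p.1| ∂T :=
      (mul_le_mul_of_nonneg_left h3 e.2).trans (mul_le_mul_of_nonneg_right her h4)
    have h6 : 0 ≤ (e : ℝ) * ∫ p, |d p.1| ∂N := mul_nonneg e.2 h2
    rw [← hR] at h1
    linarith
  have k7 : (4 * M * (1 + c) * e) * ∫ p, |d p.1| ∂Q ≤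
      1 / 2 * (4 * M * (1 + c) * e) ^ 2 + 1 / 2 * ∫ p, d p.1 ^ 2 ∂Q := by
    rw [← integral_const_mul, ← integral_const_mul]
    have : 1 / 2 * (4 * M * (1 + c) * e) ^ 2 =
      ∫ p, 1 / 2 * (4 * M * (1 + c) * (e : ℝ)) ^ 2 ∂Q := by simp
    rw [this, ← integral_add (integrable_const _) (iR3.const_mul _)]
    refine integral_mono (iR2.const_mul _) ((integrable_const _).add (iR3.const_mul _)) fun p => ?_
    simp only
    have := sq_nonneg (4 * M * (1 + c) * (e : ℝ) - |d p.1|)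
    rw [← sq_abs (d p.1)]
    nlinarith
  rw [← hR, k3, ← k1] at k2
  have e0 : (0 : ℝ) ≤ e := e.2
  have c0 : (0 : ℝ) ≤ c := c.2
  have k8 : ∫ p, d p.1 ^ 2 ∂Q ≤ e * (2 * M * (1 + c) * ∫ p, |d p.1| ∂T) := by
    have h1 := neg_abs_le (∫ p in A, f p ∂T)
    have h2 := le_abs_self (∫ p, f p ∂N)
    have : -(∫ p in A, f p ∂T) + ∫ p, f p ∂N ≤ 2 * M * (1 + c) * ∫ p, |d p.1| ∂T := by linarith
    rw [k2]
    have := mul_le_mul_of_nonneg_left this e0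
    linarith
  have k9 : (e : ℝ) * (2 * M * (1 + c) * ∫ p, |d p.1| ∂T) ≤
      (4 * M * (1 + c) * e) * ∫ p, |d p.1| ∂Q := by
    have := mul_le_mul_of_nonneg_left k6 (show 0 ≤ (e : ℝ) * (2 * M * (1 + c)) by positivity)
    linarith
  have k10 : (4 * M * (1 + c) * (e : ℝ)) ^ 2 = (4 * M * (1 + c)) ^ 2 * e ^ 2 := by ring
  linarith

lemma integral_fst (Q : Measure ((ℝ × ℝ) × (ℝ × ℝ))) (h : ℝ × ℝ → ℝ) (hm : Measurable h) :
    ∫ z, h z ∂Q.fst = ∫ p, h p.1 ∂Q :=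
  integral_map measurable_fst.aemeasurable hm.aestronglyMeasurable

lemma psi_integrable (M : ℝ) (ν : Measure ((ℝ × ℝ) × (ℝ × ℝ))) [IsFiniteMeasure ν]
    (h : ∀ᵐ p ∂ν, ‖p.1‖ ≤ M ∧ ‖p.2‖ ≤ M) : Integrable psi ν ∧
    Integrable (fun p => p.1.1 * p.1.2) ν ∧
    Integrable (fun p => p.1.1 * p.2.2) ν ∧ Integrable (fun p => p.1.2 * p.2.1) ν := by
  have hb : ∀ z : ℝ × ℝ, ‖z‖ ≤ M → |z.1| ≤ M ∧ |z.2| ≤ M := fun z hz =>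
    ⟨(norm_fst_le z).trans hz, (norm_snd_le z).trans hz⟩
  have key : ∀ f g : (ℝ × ℝ) × (ℝ × ℝ) → ℝ, Continuous f → Continuous g →
      (∀ᵐ p ∂ν, |f p| ≤ M ∧ |g p| ≤ M) → Integrable (fun p => f p * g p) ν := by
    intro f g hf hg hfg
    refine Integrable.of_bound (hf.mul hg).measurable.aestronglyMeasurable (M * M) ?_
    filter_upwards [hfg] with p hp
    rw [norm_mul]
    exact mul_le_mul hp.1 hp.2 (norm_nonneg _) ((abs_nonneg _).trans hp.1)
  have i1 : Integrable (fun p => p.1.1 * p.1.2) ν := by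
    refine key (fun p => p.1.1) (fun p => p.1.2) (by fun_prop) (by fun_prop) ?_
    filter_upwards [h] with p hp using ⟨(hb _ hp.1).1, (hb _ hp.1).2⟩
  have i2 : Integrable (fun p => p.1.1 * p.2.2) ν := by
    refine key (fun p => p.1.1) (fun p => p.2.2) (by fun_prop) (by fun_prop) ?_
    filter_upwards [h] with p hp using ⟨(hb _ hp.1).1, (hb _ hp.2).2⟩
  have i3 : Integrable (fun p => p.1.2 * p.2.1) ν := by
    refine key (fun p => p.1.2) (fun p => p.2.1) (by fun_prop) (by fun_prop) ?_
    filter_upwards [h] with p hp using ⟨(hb _ hp.1).2, (hb _ hp.2).1⟩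
  exact ⟨(i2.add i3).sub i1, i1, i2, i3⟩

lemma first_order (S : Set (ℝ × ℝ)) (hS : IsCompact S) (hconv : Convex ℝ S)
    (T : Measure ((ℝ × ℝ) × (ℝ × ℝ))) [IsProbabilityMeasure T] (hTS : T.snd Sᶜ = 0)
    (M : ℝ) (hSM : ∀ w ∈ S, ‖w‖ ≤ M) (hTM : ∀ᵐ p ∂T, ‖p.1‖ ≤ M)
    (hmart1 : ∀ g : ℝ × ℝ → ℝ, Measurable g → ∀ C : ℝ, (∀ᵐ p ∂T, |g p.1| ≤ C) →
      ∫ p, g p.1 * (p.2.1 - p.1.1) ∂T = 0)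
    (hmart2 : ∀ g : ℝ × ℝ → ℝ, Measurable g → ∀ C : ℝ, (∀ᵐ p ∂T, |g p.1| ≤ C) →
      ∫ p, g p.1 * (p.2.2 - p.1.2) ∂T = 0)
    (hopt : ∀ ρ : Measure ((ℝ × ℝ) × (ℝ × ℝ)), ∀ _ : IsProbabilityMeasure ρ, ρ.snd = T.snd →
      ∫ σ, (bary ρ σ).1 * (bary ρ σ).2 ∂ρ.fst ≤ ∫ p, p.1.1 * p.1.2 ∂T)
    (A : Set ((ℝ × ℝ) × (ℝ × ℝ))) (hA : MeasurableSet A)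
    (N : Measure ((ℝ × ℝ) × (ℝ × ℝ))) [IsFiniteMeasure N]
    (hN : N.snd = (T.restrict A).snd) (c : NNReal) (hNc : N.fst ≤ c • T.fst) :
    Integrable psi N ∧ Integrable psi T ∧ ∫ p, psi p ∂N ≤ ∫ p in A, psi p ∂T := by
  have hTm : ∀ᵐ p ∂T, ‖p.1‖ ≤ M ∧ ‖p.2‖ ≤ M := by
    filter_upwards [hTM, ae_snd_mem T hS.measurableSet hTS] with p h1 h2 using ⟨h1, hSM _ h2⟩
  have hNm : ∀ᵐ p ∂N, ‖p.1‖ ≤ M ∧ ‖p.2‖ ≤ M := by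
    have h1 : ∀ᵐ p ∂N, ‖p.1‖ ≤ M := by
      have hP : MeasurableSet {z : ℝ × ℝ | ‖z‖ ≤ M} :=
        measurableSet_le measurable_norm measurable_const
      have h1 : ∀ᵐ z ∂T.fst, ‖z‖ ≤ M := (ae_map_iff measurable_fst.aemeasurable hP).2 hTM
      have h2 : ∀ᵐ z ∂N.fst, ‖z‖ ≤ M := by
        have : ∀ᵐ z ∂(c • T.fst), ‖z‖ ≤ M := Measure.ae_smul_measure h1 c
        exact (Measure.absolutelyContinuous_of_le hNc).ae_le this
      exact (ae_map_iff measurable_fst.aemeasurable hP).1 h2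
    have h2 : ∀ᵐ p ∂N, p.2 ∈ S := by
      refine ae_snd_mem N hS.measurableSet ?_
      rw [hN, Measure.snd_apply hS.measurableSet.compl]
      rw [Measure.snd_apply hS.measurableSet.compl] at hTS
      exact le_antisymm ((Measure.restrict_apply_le _ _).trans hTS.le) bot_le
    filter_upwards [h1, h2] with p h1 h2 using ⟨h1, hSM _ h2⟩
  obtain ⟨iT, iT1, iT2, iT3⟩ := psi_integrable M T hTm
  obtain ⟨iN, iN1, iN2, iN3⟩ := psi_integrable M N hNm
  refine ⟨iN, iT, ?_⟩
  set K : ℝ := (4 * M * (1 + c)) ^ 2 with hK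
  have hV : ∫ p, psi p ∂T = ∫ p, p.1.1 * p.1.2 ∂T := by
    have m1 := hmart1 (fun z => z.2) measurable_snd M (by
      filter_upwards [hTM] with p hp using (norm_snd_le p.1).trans hp)
    have m2 := hmart2 (fun z => z.1) measurable_fst M (by
      filter_upwards [hTM] with p hp using (norm_fst_le p.1).trans hp)
    have j1 : Integrable (fun p : (ℝ × ℝ) × (ℝ × ℝ) => p.1.2 * (p.2.1 - p.1.1)) T := by
      refine (iT3.sub iT1).congr (Filter.Eventually.of_forall fun p => ?_)
      simp only [Pi.sub_apply]; ring
    have j2 : Integrable (fun p : (ℝ × ℝ) × (ℝ × ℝ) => p.1.1 * (p.2.2 - p.1.2)) T := by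
      refine (iT2.sub iT1).congr (Filter.Eventually.of_forall fun p => ?_)
      simp only [Pi.sub_apply]; ring
    have : ∀ p, psi p = p.1.1 * p.1.2 + (p.1.2 * (p.2.1 - p.1.1) + p.1.1 * (p.2.2 - p.1.2)) := by
      intro p; unfold psi; ring
    simp_rw [this]
    have j12 : Integrable (fun p : (ℝ × ℝ) × (ℝ × ℝ) =>
      p.1.2 * (p.2.1 - p.1.1) + p.1.1 * (p.2.2 - p.1.2)) T := j1.add j2
    rw [integral_add iT1 j12, integral_add j1 j2, m1, m2]; simp
  have main : ∀ e : NNReal, 0 < e → e ≤ 1 / 2 →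
      ∫ p, psi p ∂N - ∫ p in A, psi p ∂T ≤ K * e := by
    intro e he0 he2
    have he1 : (1 - e) + e = 1 := tsub_add_cancel_of_le (he2.trans (by
      rw [← NNReal.coe_le_coe]; norm_num))
    set e' : NNReal := 1 - e with he'
    have hsnd := pert_snd T N A hA hN e e' he1
    have hprob : IsProbabilityMeasure (pert T N A e e') := by
      refine ⟨?_⟩
      rw [← Measure.snd_univ, hsnd]; simp
    have s1 := second_order S hS hconv T hTS M hSM hTM (ContinuousLinearMap.fst ℝ ℝ ℝ)
      (fun z => norm_fst_le z) hmart1 A hA N hN c hNc e e' he1 he2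
    have s2 := second_order S hS hconv T hTS M hSM hTM (ContinuousLinearMap.snd ℝ ℝ ℝ)
      (fun z => norm_snd_le z) hmart2 A hA N hN c hNc e e' he1 he2
    have o := hopt (pert T N A e e') hprob hsnd
    have hI := pert_integral T N A hA e e' he1 psi iT iN
    have hQm : ∀ᵐ p ∂(pert T N A e e'), ‖p.1‖ ≤ M ∧ ‖p.2‖ ≤ M := pert_ae T N A e e' _ hTm hNm
    generalize hQ : pert T N A e e' = Q at *
    have hQS0 : Q.snd Sᶜ = 0 := by rw [hsnd, hTS]
    simp only [ContinuousLinearMap.coe_fst', ContinuousLinearMap.coe_snd'] at s1 s2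
    obtain ⟨iQ, iQ1, iQ2, iQ3⟩ := psi_integrable M Q hQm
    have hyQ : ∀ᵐ p ∂Q, ‖bary Q p.1‖ ≤ M := by
      have h1 : ∀ᵐ p ∂Q, bary Q p.1 ∈ S :=
        (ae_map_iff (p := fun z => bary Q z ∈ S) measurable_fst.aemeasurable
          ((measurable_bary Q) hS.measurableSet)).1 (bary_mem Q hS hconv hQS0)
      filter_upwards [h1] with p h1 using hSM _ h1
    have hym : Measurable (fun p : (ℝ × ℝ) × (ℝ × ℝ) => bary Q p.1) :=
      (measurable_bary Q).comp measurable_fst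
    have hM1 : ∀ᵐ σ ∂Q.fst, ‖σ‖ ≤ M := (ae_map_iff measurable_fst.aemeasurable
      (measurableSet_le measurable_norm measurable_const)).2 (hQm.mono fun p hp => hp.1)
    have b1 := bary_integral Q hS hQS0 (ContinuousLinearMap.fst ℝ ℝ ℝ) (fun z => z.2)
      measurable_snd M (hM1.mono fun z hz => (norm_snd_le z).trans hz)
    have b2 := bary_integral Q hS hQS0 (ContinuousLinearMap.snd ℝ ℝ ℝ) (fun z => z.1)
      measurable_fst M (hM1.mono fun z hz => (norm_fst_le z).trans hz)
    simp only [ContinuousLinearMap.coe_fst', ContinuousLinearMap.coe_snd'] at b1 b2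
    have hb := measurable_bary Q
    rw [integral_fst Q (fun z => z.2 * (bary Q z).1) (by fun_prop)] at b1
    rw [integral_fst Q (fun z => z.1 * (bary Q z).2) (by fun_prop)] at b2
    rw [integral_fst Q (fun z => (bary Q z).1 * (bary Q z).2) (by fun_prop)] at o
    -- integrability
    have bnd : ∀ f g : (ℝ × ℝ) × (ℝ × ℝ) → ℝ, Measurable f → Measurable g →
        (∀ᵐ p ∂Q, |f p| ≤ M ∧ |g p| ≤ M) → Integrable (fun p => f p * g p) Q := by
      intro f g hf hg hfg
      refine Integrable.of_bound (hf.mul hg).aestronglyMeasurable (M * M) ?_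
      filter_upwards [hfg] with p hp
      rw [norm_mul]
      exact mul_le_mul hp.1 hp.2 (norm_nonneg _) ((abs_nonneg _).trans hp.1)
    have i1 : Integrable (fun p => p.1.2 * (bary Q p.1).1) Q := by
      refine bnd (fun p => p.1.2) (fun p => (bary Q p.1).1) (by fun_prop) hym.fst ?_
      filter_upwards [hQm, hyQ] with p h1 h2
      exact ⟨(norm_snd_le _).trans h1.1, (norm_fst_le _).trans h2⟩
    have i2 : Integrable (fun p => p.1.1 * (bary Q p.1).2) Q := by
      refine bnd (fun p => p.1.1) (fun p => (bary Q p.1).2) (by fun_prop) hym.snd ?_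
      filter_upwards [hQm, hyQ] with p h1 h2
      exact ⟨(norm_fst_le _).trans h1.1, (norm_snd_le _).trans h2⟩
    have i3 : Integrable (fun p => (bary Q p.1).1 * (bary Q p.1).2) Q := by
      refine bnd (fun p => (bary Q p.1).1) (fun p => (bary Q p.1).2) hym.fst hym.snd ?_
      filter_upwards [hyQ] with p h2
      exact ⟨(norm_fst_le _).trans h2, (norm_snd_le _).trans h2⟩
    have low : ∫ p, (p.1.1 * (bary Q p.1).2 + p.1.2 * (bary Q p.1).1 - p.1.1 * p.1.2
        - (1 / 2 * ((bary Q p.1).1 - p.1.1) ^ 2 + 1 / 2 * ((bary Q p.1).2 - p.1.2) ^ 2)) ∂Q ≤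
        ∫ p, (bary Q p.1).1 * (bary Q p.1).2 ∂Q := by
      refine integral_mono (((i2.add i1).sub iQ1).sub
        ((s1.1.const_mul _).add (s2.1.const_mul _))) i3 fun p => ?_
      simp only
      nlinarith [sq_nonneg (((bary Q p.1).1 - p.1.1) + ((bary Q p.1).2 - p.1.2))]
    have q1 : Integrable (fun p => p.1.1 * (bary Q p.1).2 + p.1.2 * (bary Q p.1).1) Q := i2.add i1
    have q2 : Integrable (fun p => p.1.1 * (bary Q p.1).2 + p.1.2 * (bary Q p.1).1
      - p.1.1 * p.1.2) Q := q1.sub iQ1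
    have q3 : Integrable (fun p => 1 / 2 * ((bary Q p.1).1 - p.1.1) ^ 2
      + 1 / 2 * ((bary Q p.1).2 - p.1.2) ^ 2) Q := (s1.1.const_mul _).add (s2.1.const_mul _)
    have q4 : Integrable (fun p : (ℝ × ℝ) × (ℝ × ℝ) => p.1.1 * p.2.2 + p.1.2 * p.2.1) Q :=
      iQ2.add iQ3
    rw [integral_sub q2 q3, integral_sub q1 iQ1, integral_add i2 i1,
      integral_add (s1.1.const_mul _) (s2.1.const_mul _), integral_const_mul, integral_const_mul,
      b1, b2, ← integral_add iQ2 iQ3, ← integral_sub q4 iQ1] at low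
    change ∫ p, psi p ∂Q - _ ≤ _ at low
    have t := hI.2
    have t1 := s1.2
    have t2 := s2.2
    have e0 : (0 : ℝ) < e := by exact_mod_cast he0
    have fin : (e : ℝ) * (∫ p, psi p ∂N - ∫ p in A, psi p ∂T) ≤ e * (K * e) := by
      rw [hV] at t
      nlinarith
    exact le_of_mul_le_mul_left fin e0
  by_contra hcon
  push Not at hcon
  set D := ∫ p, psi p ∂N - ∫ p in A, psi p ∂T with hD
  have hD0 : 0 < D := by rw [hD]; linarith
  have hK0 : 0 ≤ K := sq_nonneg _
  set r : ℝ := min (1 / 2) (D / (2 * (K + 1))) with hr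
  have hr0 : 0 < r := by rw [hr]; positivity
  have hrc : (r.toNNReal : ℝ) = r := Real.coe_toNNReal r hr0.le
  have h := main r.toNNReal (Real.toNNReal_pos.2 hr0) (by
    rw [← NNReal.coe_le_coe, hrc]; push_cast; exact min_le_left _ _)
  rw [hrc] at h
  have h2 : r ≤ D / (2 * (K + 1)) := min_le_right _ _
  have h3 : K * r ≤ K * (D / (2 * (K + 1))) := mul_le_mul_of_nonneg_left h2 hK0
  have h4 : K * (D / (2 * (K + 1))) < D := by
    rw [← mul_div_assoc, div_lt_iff₀ (by positivity)]
    nlinarith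
  linarith

lemma supp_ineq (T : Measure ((ℝ × ℝ) × (ℝ × ℝ))) [IsProbabilityMeasure T]
    (hfo : ∀ A : Set ((ℝ × ℝ) × (ℝ × ℝ)), MeasurableSet A →
      ∀ N : Measure ((ℝ × ℝ) × (ℝ × ℝ)), ∀ _ : IsFiniteMeasure N,
      N.snd = (T.restrict A).snd → ∀ c : NNReal, N.fst ≤ c • T.fst →
      Integrable psi N ∧ Integrable psi T ∧ ∫ p, psi p ∂N ≤ ∫ p in A, psi p ∂T)
    (p q : (ℝ × ℝ) × (ℝ × ℝ)) (hp : p ∈ T.support) (hq : q ∈ T.support) :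
    psi (q.1, p.2) ≤ psi p := by
  by_contra hcon
  push Not at hcon
  obtain ⟨r, hr1, hr'⟩ := exists_between hcon
  obtain ⟨r', hr2, hr3⟩ := exists_between hr'
  have hU : IsOpen {z | psi z < r} := isOpen_lt continuous_psi continuous_const
  have hV : IsOpen {z | r' < psi z} := isOpen_lt continuous_const continuous_psi
  have hVn : {z | r' < psi z} ∈ nhds (q.1, p.2) := hV.mem_nhds hr3
  obtain ⟨B, W, hBo, hBm, hWo, hWm, hBW⟩ := mem_nhds_prod_iff'.1 hVn
  set A : Set ((ℝ × ℝ) × (ℝ × ℝ)) := {z | psi z < r} ∩ Prod.snd ⁻¹' W with hAdef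
  have hAo : IsOpen A := hU.inter (hWo.preimage continuous_snd)
  have hTA : 0 < T A := (Measure.mem_support_iff_forall p).1 hp A (hAo.mem_nhds ⟨hr1, hWm⟩)
  have hTB : 0 < T.fst B := by
    rw [Measure.fst_apply hBo.measurableSet]
    exact (Measure.mem_support_iff_forall q).1 hq _ ((hBo.preimage continuous_fst).mem_nhds hBm)
  set c : NNReal := (T.fst B)⁻¹.toNNReal with hc
  have hcc : (c : ENNReal) = (T.fst B)⁻¹ := ENNReal.coe_toNNReal (ENNReal.inv_ne_top.2 hTB.ne')
  set N : Measure ((ℝ × ℝ) × (ℝ × ℝ)) := c • ((T.fst.restrict B).prod (T.restrict A).snd) with hN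
  have hNs : N.snd = (T.restrict A).snd := by
    rw [hN, Measure.snd, Measure.map_smul, Measure.map_snd_prod, Measure.restrict_apply_univ,
      ENNReal.smul_def, smul_smul, hcc,
      ENNReal.inv_mul_cancel hTB.ne' (measure_ne_top _ _), one_smul]
  have hNf : N.fst ≤ c • T.fst := by
    rw [hN, Measure.fst, Measure.map_smul, Measure.map_fst_prod]
    have hle : (T.restrict A).snd Set.univ • T.fst.restrict B ≤ T.fst := by
      refine Measure.le_iff'.2 fun s => ?_
      rw [Measure.smul_apply, smul_eq_mul, Measure.snd_univ, Measure.restrict_apply_univ]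
      calc T A * (T.fst.restrict B) s ≤ 1 * T.fst s :=
            mul_le_mul' prob_le_one (Measure.restrict_apply_le _ _)
        _ = _ := one_mul _
    refine Measure.le_iff'.2 fun s => ?_
    rw [Measure.smul_apply, Measure.smul_apply, ENNReal.smul_def, ENNReal.smul_def,
      smul_eq_mul, smul_eq_mul]
    exact mul_le_mul' le_rfl (hle s)
  obtain ⟨iN, iT, h⟩ := hfo A hAo.measurableSet N inferInstance hNs c hNf
  have hNA : N.real Set.univ = T.real A := by
    rw [measureReal_def, measureReal_def, ← Measure.snd_univ, hNs, Measure.snd_univ,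
      Measure.restrict_apply_univ]
  have hNae : ∀ᵐ z ∂N, r' ≤ psi z := by
    refine Measure.ae_smul_measure ?_ c
    have h1 : ∀ᵐ z ∂((T.fst.restrict B).prod (T.restrict A).snd), z.1 ∈ B :=
      Measure.quasiMeasurePreserving_fst.ae (ae_restrict_mem hBo.measurableSet)
    have h2 : ∀ᵐ z ∂((T.fst.restrict B).prod (T.restrict A).snd), z.2 ∈ W := by
      refine Measure.quasiMeasurePreserving_snd.ae (p := fun z => z ∈ W) ?_
      refine (ae_map_iff (p := fun z => z ∈ W) measurable_snd.aemeasurable hWo.measurableSet).2 ?_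
      filter_upwards [ae_restrict_mem hAo.measurableSet] with z hz using hz.2
    filter_upwards [h1, h2] with z h1 h2
    exact le_of_lt (hBW (Set.mk_mem_prod h1 h2))
  have l1 : r' * T.real A ≤ ∫ p, psi p ∂N := by
    have := integral_mono_ae (integrable_const r') iN hNae
    rw [integral_const, hNA, smul_eq_mul] at this
    linarith
  have l2 : ∫ p in A, psi p ∂T ≤ r * T.real A := by
    have := integral_mono_ae (μ := T.restrict A) iT.restrict (integrable_const r) (by
      filter_upwards [ae_restrict_mem hAo.measurableSet] with z hz using le_of_lt hz.1)
    rw [integral_const, smul_eq_mul, measureReal_restrict_apply_univ] at this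
    linarith
  have hA0 : 0 < T.real A := by
    rw [measureReal_def]; exact ENNReal.toReal_pos hTA.ne' (measure_ne_top _ _)
  nlinarith

lemma supp_mono (T : Measure ((ℝ × ℝ) × (ℝ × ℝ))) [IsProbabilityMeasure T]
    (M : ℝ) (hTm : ∀ᵐ p ∂T, ‖p.1‖ ≤ M ∧ ‖p.2‖ ≤ M)
    (hmart1 : ∀ g : ℝ × ℝ → ℝ, Measurable g → ∀ C : ℝ, (∀ᵐ p ∂T, |g p.1| ≤ C) →
      ∫ p, g p.1 * (p.2.1 - p.1.1) ∂T = 0)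
    (hmart2 : ∀ g : ℝ × ℝ → ℝ, Measurable g → ∀ C : ℝ, (∀ᵐ p ∂T, |g p.1| ≤ C) →
      ∫ p, g p.1 * (p.2.2 - p.1.2) ∂T = 0)
    (hP : ∀ p ∈ T.support, ∀ q ∈ T.support, psi (q.1, p.2) ≤ psi p)
    (p q : (ℝ × ℝ) × (ℝ × ℝ)) (hp : p ∈ T.support) (hq : q ∈ T.support) :
    psi (q.1, p.1) ≤ psi (p.1, p.1) := by
  classical
  by_contra hcon
  push Not at hcon
  obtain ⟨δ, hδ0, hδ⟩ := exists_between (sub_pos.2 hcon)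
  set F0 : ℝ × ℝ → ℝ := fun z => psi (q.1, z) - psi (z, z) with hF0
  have hF0c : Continuous F0 := by
    have := continuous_psi
    fun_prop
  set U : Set (ℝ × ℝ) := {z | δ < F0 z} with hU
  have hUo : IsOpen U := isOpen_lt continuous_const hF0c
  have hUm := hUo.measurableSet
  have hTU : 0 < T (Prod.fst ⁻¹' U) := (Measure.mem_support_iff_forall p).1 hp _
    ((hUo.preimage continuous_fst).mem_nhds hδ)
  have ind : ∀ f : ℝ × ℝ → ℝ, Continuous f → ∃ C : ℝ, Measurable (U.indicator f) ∧
      ∀ᵐ p ∂T, |U.indicator f p.1| ≤ C := by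
    intro f hf
    obtain ⟨C, hC⟩ := ((isCompact_closedBall (0 : ℝ × ℝ) M).image hf).isBounded.exists_norm_le
    refine ⟨max C 0, hf.measurable.indicator hUm, ?_⟩
    filter_upwards [hTm] with p hp
    by_cases hpU : p.1 ∈ U
    · rw [Set.indicator_of_mem hpU]
      exact le_max_of_le_left (hC _ ⟨p.1, by simpa using hp.1, rfl⟩)
    · rw [Set.indicator_of_notMem hpU]; simp
  obtain ⟨C0, m0, b0⟩ := ind F0 hF0c
  obtain ⟨C1, m1, b1⟩ := ind (fun z => q.1.2 - z.2) (by fun_prop)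
  obtain ⟨C2, m2, b2⟩ := ind (fun z => q.1.1 - z.1) (by fun_prop)
  have e1 := hmart1 _ m1 C1 b1
  have e2 := hmart2 _ m2 C2 b2
  have i0 : Integrable (fun p : (ℝ × ℝ) × (ℝ × ℝ) => U.indicator F0 p.1) T :=
    Integrable.of_bound (m0.comp measurable_fst).aestronglyMeasurable C0 b0
  have ig : ∀ (g : ℝ × ℝ → ℝ) (k : (ℝ × ℝ) × (ℝ × ℝ) → ℝ) (C : ℝ), Measurable g → Measurable k →
      (∀ᵐ p ∂T, |g p.1| ≤ C) → (∀ᵐ p ∂T, |k p| ≤ 2 * M) →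
      Integrable (fun p => g p.1 * k p) T := by
    intro g k C hg hk h1 h2
    refine Integrable.of_bound ((hg.comp measurable_fst).mul hk).aestronglyMeasurable
      (C * (2 * M)) ?_
    filter_upwards [h1, h2] with p h1 h2
    rw [norm_mul]
    exact mul_le_mul h1 h2 (norm_nonneg _) ((abs_nonneg _).trans h1)
  have i1 := ig _ (fun p => p.2.1 - p.1.1) C1 m1 (by fun_prop) b1 (by
    filter_upwards [hTm] with p hp
    have h1 := (norm_fst_le p.1).trans hp.1
    have h2 := (norm_fst_le p.2).trans hp.2
    rw [Real.norm_eq_abs] at h1 h2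
    refine (abs_sub _ _).trans ?_
    linarith)
  have i2 := ig _ (fun p => p.2.2 - p.1.2) C2 m2 (by fun_prop) b2 (by
    filter_upwards [hTm] with p hp
    have h1 := (norm_snd_le p.1).trans hp.1
    have h2 := (norm_snd_le p.2).trans hp.2
    rw [Real.norm_eq_abs] at h1 h2
    refine (abs_sub _ _).trans ?_
    linarith)
  have i12 : Integrable (fun p : (ℝ × ℝ) × (ℝ × ℝ) =>
      U.indicator (fun z => q.1.2 - z.2) p.1 * (p.2.1 - p.1.1) +
      U.indicator (fun z => q.1.1 - z.1) p.1 * (p.2.2 - p.1.2)) T := i1.add i2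
  have tot : ∫ p, (U.indicator F0 p.1 +
      (U.indicator (fun z => q.1.2 - z.2) p.1 * (p.2.1 - p.1.1) +
      U.indicator (fun z => q.1.1 - z.1) p.1 * (p.2.2 - p.1.2))) ∂T ≤ 0 := by
    refine integral_nonpos_of_ae ?_
    filter_upwards [(Measure.support_mem_ae : T.support ∈ ae T)] with z hz
    have := hP z hz q hq
    by_cases hzU : z.1 ∈ U
    · simp only [Set.indicator_of_mem hzU, hF0, Pi.zero_apply]
      simp only [psi] at this ⊢
      linarith
    · simp [Set.indicator_of_notMem hzU]
  rw [integral_add i0 i12, integral_add i1 i2, e1, e2] at tot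
  have low : ∫ p, U.indicator (fun _ => δ) p.1 ∂T ≤
      ∫ p : (ℝ × ℝ) × (ℝ × ℝ), U.indicator F0 p.1 ∂T := by
    refine integral_mono ?_ i0 fun z => ?_
    · obtain ⟨C, m, b⟩ := ind (fun _ => δ) continuous_const
      exact Integrable.of_bound (m.comp measurable_fst).aestronglyMeasurable C b
    · exact Set.indicator_le_indicator' (fun h => le_of_lt h)
  have : ∫ p, U.indicator (fun _ => δ) p.1 ∂T = T.real (Prod.fst ⁻¹' U) * δ := by
    have h1 : ∀ p : (ℝ × ℝ) × (ℝ × ℝ), U.indicator (fun _ => δ) p.1 =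
      (Prod.fst ⁻¹' U).indicator (fun _ => δ) p := fun p => rfl
    simp_rw [h1]
    rw [integral_indicator (measurable_fst hUm), integral_const, measureReal_restrict_apply_univ,
      smul_eq_mul]
  rw [this] at low
  have hA0 : 0 < T.real (Prod.fst ⁻¹' U) := by
    rw [measureReal_def]; exact ENNReal.toReal_pos hTU.ne' (measure_ne_top _ _)
  have := mul_pos hA0 hδ0
  linarith

lemma psi_id (a : ℝ) (x w : ℝ × ℝ) :
    4 * a * psi (x, w) = (w.2 + a * w.1) ^ 2 - ((w.2 + a * w.1) - (x.2 + a * x.1)) ^ 2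
      + ((x.2 - a * x.1) - (w.2 - a * w.1)) ^ 2 - (w.2 - a * w.1) ^ 2 := by
  simp only [psi]; ring

lemma geom (S : Set (ℝ × ℝ)) (hconv : Convex ℝ S) (hInteg : (interior S).Nonempty)
    (a : ℝ) (ha : 0 < a) (P : Set ((ℝ × ℝ) × (ℝ × ℝ)))
    (hPS : ∀ p ∈ P, p.2 ∈ S) (hPθ : ∀ p ∈ P, p.1.2 + a * p.1.1 = p.2.2 + a * p.2.1)
    (hb : ∀ p ∈ P, ∀ q ∈ P, psi (q.1, p.2) ≤ psi p)
    (hc : ∀ p ∈ P, ∀ q ∈ P, psi (q.1, p.1) ≤ psi (p.1, p.1))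
    (hd : ∀ w ∈ S, ∃ x, (x, w) ∈ P) :
    ∃ b : ℝ, ∀ p ∈ P, p.1.2 = a * p.1.1 + b := by
  choose! X hX using hd
  set th : ℝ × ℝ → ℝ := fun w => w.2 + a * w.1 with hth
  set h : ℝ × ℝ → ℝ := fun w => (X w).2 - a * (X w).1 with hh
  have lip : ∀ p ∈ P, ∀ w ∈ S, (h w - (p.1.2 - a * p.1.1)) ^ 2 ≤ (th w - th p.2) ^ 2 := by
    intro p hp w hw
    have h1 := hc p hp _ (hX w hw)
    have h2 := mul_le_mul_of_nonneg_left h1 (show 0 ≤ 4 * a by positivity)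
    rw [psi_id, psi_id] at h2
    have h3 := hPθ p hp
    have h4 := hPθ _ (hX w hw)
    simp only [hh, hth] at *
    rw [← h3, ← h4]
    nlinarith
  have lipS : ∀ w ∈ S, ∀ w' ∈ S, (h w - h w') ^ 2 ≤ (th w - th w') ^ 2 :=
    fun w hw w' hw' => lip _ (hX w' hw') w hw
  have eqS : ∀ w ∈ S, ∀ w' ∈ S, th w = th w' → h w = h w' := by
    intro w hw w' hw' e
    have := lipS w hw w' hw'
    rw [e, sub_self] at this
    have h2 : (h w - h w') ^ 2 = 0 := le_antisymm (by simpa using this) (sq_nonneg _)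
    exact sub_eq_zero.1 (pow_eq_zero_iff (two_ne_zero) |>.1 h2)
  have key : ∀ w ∈ S, ∀ w' ∈ S,
      (h w' - h w) * (h w' + h w - 2 * (w.2 - a * w.1)) ≤ (th w' - th w) ^ 2 := by
    intro w hw w' hw'
    have h1 := hb _ (hX w hw) _ (hX w' hw')
    have h2 := mul_le_mul_of_nonneg_left h1 (show 0 ≤ 4 * a by positivity)
    rw [psi_id, psi_id] at h2
    have h3 := hPθ _ (hX w hw)
    have h4 := hPθ _ (hX w' hw')
    simp only [hh, hth] at *
    rw [h3, h4] at h2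
    nlinarith
  -- local quadratic bound
  have loc : ∀ w₀ ∈ interior S, ∃ ε > 0, ∀ w ∈ S, |th w - th w₀| < ε →
      ε * |h w - h w₀| ≤ (th w - th w₀) ^ 2 := by
    intro w₀ hw₀
    set s₀ := w₀.2 - a * w₀.1 with hs₀
    set k : ℝ × ℝ → ℝ × ℝ := fun z => ((z.1 - z.2) / (2 * a), (z.1 + z.2) / 2) with hk
    have hkc : Continuous k := by fun_prop
    have hk1 : ∀ z, th (k z) = z.1 := by
      intro z; simp only [hth, hk]; field_simp; ring
    have hk2 : ∀ z, (k z).2 - a * (k z).1 = z.2 := by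
      intro z; simp only [hk]; field_simp; ring
    have hk0 : k (th w₀, s₀) = w₀ := by
      ext
      · simp only [hk, hth, hs₀]; field_simp; ring
      · simp only [hk, hth, hs₀]; ring
    have hnb : k ⁻¹' (interior S) ∈ nhds (th w₀, s₀) :=
      (isOpen_interior.preimage hkc).mem_nhds (by simpa [hk0] using hw₀)
    obtain ⟨ε, hε, hball⟩ := Metric.mem_nhds_iff.1 hnb
    refine ⟨ε, hε, ?_⟩
    have hmem : ∀ t s : ℝ, |t - th w₀| < ε → |s - s₀| < ε → k (t, s) ∈ S := by
      intro t s ht hs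
      refine interior_subset (hball ?_)
      rw [Metric.mem_ball, Prod.dist_eq]
      exact max_lt (by simpa [Real.dist_eq] using ht) (by simpa [Real.dist_eq] using hs)
    have hw₀S := interior_subset hw₀
    have ptin : ∀ w ∈ S, |th w - th w₀| < ε → ∀ s, |s - s₀| < ε → ∀ w' ∈ S,
        (h w' - h w) * (h w' + h w - 2 * s) ≤ (th w' - th w) ^ 2 := by
      intro w hw hlt s hs w' hw'
      have m := hmem (th w) s hlt hs
      have e := eqS _ m w hw (hk1 _)
      have := key _ m w' hw'
      rw [hk2, hk1, e] at this
      exact this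
    intro w hw hlt
    have p1 : |(s₀ - ε / 2) - s₀| < ε := by
      rw [sub_right_comm, sub_self, zero_sub, abs_neg, abs_of_pos (by positivity)]; linarith
    have p2 : |(s₀ + ε / 2) - s₀| < ε := by
      rw [add_sub_cancel_left, abs_of_pos (by positivity)]; linarith
    have z0 : |th w₀ - th w₀| < ε := by simpa using hε
    have q1 := ptin w hw hlt _ p1 w₀ hw₀S
    have q2 := ptin w hw hlt _ p2 w₀ hw₀S
    have q3 := ptin w₀ hw₀S z0 _ p1 w hw
    have q4 := ptin w₀ hw₀S z0 _ p2 w hw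
    rcases le_total (h w₀) (h w) with hle | hle
    · rw [abs_of_nonneg (sub_nonneg.2 hle)]
      rcases le_total (2 * s₀) (h w + h w₀) with hs | hs
      · nlinarith [mul_nonneg (sub_nonneg.2 hle) (sub_nonneg.2 hs)]
      · nlinarith [mul_nonneg (sub_nonneg.2 hle) (sub_nonneg.2 hs)]
    · rw [abs_of_nonpos (sub_nonpos.2 hle)]
      rcases le_total (2 * s₀) (h w + h w₀) with hs | hs
      · nlinarith [mul_nonneg (sub_nonneg.2 hle) (sub_nonneg.2 hs)]
      · nlinarith [mul_nonneg (sub_nonneg.2 hle) (sub_nonneg.2 hs)]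
  have thl : ∀ w w', |th w - th w'| ≤ (1 + a) * ‖w - w'‖ := by
    intro w w'
    have h1 := norm_fst_le (w - w')
    have h2 := norm_snd_le (w - w')
    rw [Real.norm_eq_abs] at h1 h2
    have : th w - th w' = (w - w').2 + a * (w - w').1 := by
      simp only [hth, Prod.fst_sub, Prod.snd_sub]; ring
    rw [this]
    refine (abs_add_le _ _).trans ?_
    rw [abs_mul, abs_of_pos ha]
    have := mul_le_mul_of_nonneg_left h1 ha.le
    linarith
  have hder : ∀ w₀ ∈ interior S, HasFDerivAt h (0 : ℝ × ℝ →L[ℝ] ℝ) w₀ := by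
    intro w₀ hw₀
    obtain ⟨ε, hε, hl⟩ := loc w₀ hw₀
    have hO : (fun w => h w - h w₀) =O[nhds w₀] fun w => ‖w - w₀‖ ^ 2 := by
      refine Asymptotics.IsBigO.of_bound ((1 + a) ^ 2 / ε) ?_
      have hthc : Continuous th := by fun_prop
      have ev : ∀ᶠ w in nhds w₀, |th w - th w₀| < ε := by
        have : Continuous fun w => |th w - th w₀| := by fun_prop
        refine this.continuousAt.eventually_lt continuousAt_const ?_
        simpa using hε
      filter_upwards [ev, mem_interior_iff_mem_nhds.1 hw₀] with w h1 h2
      have h3 := hl w h2 h1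
      have h4 := thl w w₀
      have h5 : (th w - th w₀) ^ 2 ≤ ((1 + a) * ‖w - w₀‖) ^ 2 := by
        rw [← sq_abs]; exact pow_le_pow_left₀ (abs_nonneg _) h4 2
      rw [Real.norm_eq_abs, Real.norm_eq_abs, abs_of_nonneg (sq_nonneg ‖w - w₀‖),
        div_mul_eq_mul_div, le_div_iff₀ hε]
      nlinarith
    have := hO.hasFDerivAt (𝕜 := ℝ) (by norm_num)
    simpa using this.add_const (h w₀)
  obtain ⟨c, hcI⟩ := hInteg
  have hconst : ∀ w ∈ interior S, h w = h c := by
    intro w hw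
    refine hconv.interior.is_const_of_fderivWithin_eq_zero (𝕜 := ℝ) (f := h) ?_ ?_ hw hcI
    · intro z hz; exact (hder z hz).differentiableAt.differentiableWithinAt
    · intro z hz
      rw [fderivWithin_of_isOpen isOpen_interior hz]
      exact (hder z hz).fderiv
  refine ⟨h c, ?_⟩
  intro p hp
  have hpS := hPS p hp
  have hcl : p.2 ∈ closure (interior S) := by
    rw [hconv.closure_interior_eq_closure_of_nonempty_interior ⟨c, hcI⟩]
    exact subset_closure hpS
  have hz : |h c - (p.1.2 - a * p.1.1)| ≤ 0 := by
    refine le_of_forall_pos_le_add fun δ hδ => ?_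
    obtain ⟨w, hw, hdist⟩ := Metric.mem_closure_iff.1 hcl (δ / (1 + a)) (by positivity)
    have h1 := lip p hp w (interior_subset hw)
    rw [hconst w hw] at h1
    have h2 := sq_le_sq.1 h1
    have h3 := thl w p.2
    rw [dist_comm, dist_eq_norm, lt_div_iff₀ (by positivity)] at hdist
    linarith
  have := abs_eq_zero.1 (le_antisymm hz (abs_nonneg _))
  linarith

/-- The sigma-algebra generated by `ω₂ + a ω₁`. -/
abbrev sigTheta (a : ℝ) : MeasurableSpace (ℝ × ℝ) :=
  MeasurableSpace.comap (fun ω : ℝ × ℝ => ω.2 + a * ω.1) inferInstance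

/-- **Two-dimensional moment persuasion, necessity** (Proposition 2, "only if" direction):
assume additionally that `Ω` is convex with non-empty interior.  Let `a > 0` and let `G` be the
law of the posterior mean `x = E[ω | ω₂ + aω₁]` induced by revealing `ω₂ + aω₁`.  If `G` is
optimal for (P_m), then the support of `G` lies in a line `{x₂ = a x₁ + b}` for some `b`. -/
theorem two_dim_revelation_optimal_necessity
    (S : Set (ℝ × ℝ)) (hScomp : IsCompact S)
    (hSpos : ∀ ω ∈ S, 0 ≤ ω.1 ∧ 0 ≤ ω.2)
    (hSconv : Convex ℝ S) (hSint : (interior S).Nonempty)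
    (F₀ : Measure (ℝ × ℝ)) [IsProbabilityMeasure F₀]
    (hF₀supp : msupport F₀ = S)
    (X : Set (ℝ × ℝ)) (hX : X = convexHull ℝ S)
    (a : ℝ) (ha : 0 < a)
    (x : ℝ × ℝ → ℝ × ℝ)
    (hx : x = F₀[(fun ω : ℝ × ℝ => ω) |
      MeasurableSpace.comap (fun ω : ℝ × ℝ => ω.2 + a * ω.1) inferInstance])
    (G : Measure (ℝ × ℝ)) (hG : G = Measure.map x F₀)
    (hopt : ∀ G' : Measure (ℝ × ℝ), IsProbabilityMeasure G' → G' X = 1 →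
      (∀ φ : ℝ × ℝ → ℝ, ContinuousOn φ X → ConvexOn ℝ X φ →
        ∫ z, φ z ∂G' ≤ ∫ z, φ z ∂F₀) →
      ∫ z, z.1 * z.2 ∂G' ≤ ∫ z, z.1 * z.2 ∂G) :
    ∃ b : ℝ, msupport G ⊆ {z : ℝ × ℝ | z.2 = a * z.1 + b} := by
  have hx' : x = F₀[(fun ω : ℝ × ℝ => ω) | sigTheta a] := hx
  have hXS : X = S := by rw [hX, hSconv.convexHull_eq]
  have hthm : Measurable (fun ω : ℝ × ℝ => ω.2 + a * ω.1) := by fun_prop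
  have hmle : sigTheta a ≤ (inferInstance : MeasurableSpace (ℝ × ℝ)) := hthm.comap_le
  have hsup : F₀.support = S := by
    rw [← hF₀supp, Measure.support_eq_forall_isOpen]
    ext z
    simp only [msupport, Set.mem_ofPred_eq, pos_iff_ne_zero]
    exact ⟨fun h U hU hz => h U hz hU, fun h U hz hU => h U hU hz⟩
  have hF0 : F₀ Sᶜ = 0 := by rw [← hsup]; exact Measure.measure_compl_support
  have hFS : ∀ᵐ w ∂F₀, w ∈ S := hF0
  obtain ⟨M, hSM⟩ := hScomp.isBounded.exists_norm_le
  have hM0 : 0 ≤ M := by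
    obtain ⟨w, hw⟩ := hFS.exists
    exact (norm_nonneg _).trans (hSM w hw)
  have hidint := integrable_of_ae_mem F₀ hScomp hFS
  have hxsm : StronglyMeasurable[sigTheta a] x := by rw [hx']; exact stronglyMeasurable_condExp
  have hxm : Measurable x := (hxsm.mono hmle).measurable
  have hLx : ∀ L : ℝ × ℝ →L[ℝ] ℝ, (fun w => L (x w)) =ᵐ[F₀] F₀[(fun w => L w) | sigTheta a] := by
    intro L
    rw [hx']
    exact L.comp_condExp_comm hidint
  have hLb : ∀ L : ℝ × ℝ →L[ℝ] ℝ, (∀ z, |L z| ≤ ‖z‖) → ∀ᵐ w ∂F₀, |L (x w)| ≤ M := by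
    intro L hL
    have h1 : ∀ᵐ w ∂F₀, |L w| ≤ (⟨M, hM0⟩ : NNReal) := by
      filter_upwards [hFS] with w hw using (hL w).trans (hSM w hw)
    have h2 := ae_bdd_condExp_of_ae_bdd (m := sigTheta a) h1
    filter_upwards [h2, hLx L] with w h2 h3
    rw [h3]; exact h2
  have hxb : ∀ᵐ w ∂F₀, ‖x w‖ ≤ M := by
    filter_upwards [hLb (ContinuousLinearMap.fst ℝ ℝ ℝ) (fun z => norm_fst_le z),
      hLb (ContinuousLinearMap.snd ℝ ℝ ℝ) (fun z => norm_snd_le z)] with w h1 h2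
    exact max_le h1 h2
  have hxθ : ∀ᵐ w ∂F₀, (x w).2 + a * (x w).1 = w.2 + a * w.1 := by
    have h1 := hLx (ContinuousLinearMap.snd ℝ ℝ ℝ + a • ContinuousLinearMap.fst ℝ ℝ ℝ)
    have h2 : F₀[(fun w => (ContinuousLinearMap.snd ℝ ℝ ℝ + a • ContinuousLinearMap.fst ℝ ℝ ℝ) w)
        | sigTheta a] = fun w => (ContinuousLinearMap.snd ℝ ℝ ℝ + a • ContinuousLinearMap.fst ℝ ℝ ℝ) w := by
      refine condExp_of_stronglyMeasurable hmle ?_ (ContinuousLinearMap.integrable_comp _ hidint)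
      exact (comap_measurable (fun ω : ℝ × ℝ => ω.2 + a * ω.1)).stronglyMeasurable
    rw [h2] at h1
    filter_upwards [h1] with w hw
    simpa using hw
  -- the joint law of (posterior mean, state)
  have hpair : Measurable (fun w => (x w, w)) := hxm.prodMk measurable_id
  set T : Measure ((ℝ × ℝ) × (ℝ × ℝ)) := F₀.map (fun w => (x w, w)) with hT
  have hTprob : IsProbabilityMeasure T := Measure.isProbabilityMeasure_map hpair.aemeasurable
  have hTsnd : T.snd = F₀ := by
    rw [hT, Measure.snd_map_prodMk hxm]; exact Measure.map_id
  have hTfst : T.fst = G := by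
    rw [hT, hG]; exact Measure.fst_map_prodMk measurable_id
  have hTae : ∀ P : (ℝ × ℝ) × (ℝ × ℝ) → Prop, MeasurableSet {p | P p} →
      (∀ᵐ w ∂F₀, P (x w, w)) → ∀ᵐ p ∂T, P p := fun P hP h =>
    (ae_map_iff hpair.aemeasurable hP).2 h
  have hTS : T.snd Sᶜ = 0 := by rw [hTsnd, hF0]
  have hTM : ∀ᵐ p ∂T, ‖p.1‖ ≤ M :=
    hTae _ (measurableSet_le (by fun_prop) measurable_const) hxb
  have hTm : ∀ᵐ p ∂T, ‖p.1‖ ≤ M ∧ ‖p.2‖ ≤ M := by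
    filter_upwards [hTM, ae_snd_mem T hScomp.measurableSet hTS] with p h1 h2 using ⟨h1, hSM _ h2⟩
  have hmart : ∀ L : ℝ × ℝ →L[ℝ] ℝ, ∀ g : ℝ × ℝ → ℝ, Measurable g → ∀ C : ℝ,
      (∀ᵐ p ∂T, |g p.1| ≤ C) → ∫ p, g p.1 * (L p.2 - L p.1) ∂T = 0 := by
    intro L g hg C hC
    have hC' : ∀ᵐ w ∂F₀, ‖g (x w)‖ ≤ C :=
      (ae_map_iff hpair.aemeasurable (measurableSet_le (by fun_prop) measurable_const)).1 hC
    have hLi : Integrable (fun w => L w) F₀ := L.integrable_comp hidint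
    have hLxi : Integrable (fun w => L (x w)) F₀ := by
      refine L.integrable_comp ?_
      rw [hx']; exact integrable_condExp
    have hgm : StronglyMeasurable[sigTheta a] (fun w => g (x w)) :=
      (hg.comp hxsm.measurable).stronglyMeasurable
    have hga : AEStronglyMeasurable (fun w => g (x w)) F₀ := (hg.comp hxm).aestronglyMeasurable
    have i1 : Integrable (fun w => g (x w) * L w) F₀ := hLi.bdd_mul hga hC'
    have i2 : Integrable (fun w => g (x w) * L (x w)) F₀ := hLxi.bdd_mul hga hC'
    have e1 := condExp_stronglyMeasurable_mul_of_bound hmle hgm hLi C hC'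
    have e2 : ∫ w, g (x w) * L w ∂F₀ = ∫ w, g (x w) * L (x w) ∂F₀ := by
      rw [← integral_condExp hmle (f := fun w => g (x w) * L w)]
      apply integral_congr_ae
      filter_upwards [e1, hLx L] with w h1 h2
      rw [h2]; exact h1
    rw [hT, integral_map hpair.aemeasurable]
    · simp only [mul_sub]
      rw [integral_sub i1 i2, e2, sub_self]
    · have : Measurable (fun p : (ℝ × ℝ) × (ℝ × ℝ) => g p.1 * (L p.2 - L p.1)) :=
        (hg.comp measurable_fst).mul
          ((L.measurable.comp measurable_snd).sub (L.measurable.comp measurable_fst))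
      exact this.aestronglyMeasurable
  have hmart1 : ∀ g : ℝ × ℝ → ℝ, Measurable g → ∀ C : ℝ, (∀ᵐ p ∂T, |g p.1| ≤ C) →
      ∫ p, g p.1 * (p.2.1 - p.1.1) ∂T = 0 := hmart (ContinuousLinearMap.fst ℝ ℝ ℝ)
  have hmart2 : ∀ g : ℝ × ℝ → ℝ, Measurable g → ∀ C : ℝ, (∀ᵐ p ∂T, |g p.1| ≤ C) →
      ∫ p, g p.1 * (p.2.2 - p.1.2) ∂T = 0 := hmart (ContinuousLinearMap.snd ℝ ℝ ℝ)
  have hopt' : ∀ ρ : Measure ((ℝ × ℝ) × (ℝ × ℝ)), ∀ _ : IsProbabilityMeasure ρ,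
      ρ.snd = T.snd →
      ∫ σ, (bary ρ σ).1 * (bary ρ σ).2 ∂ρ.fst ≤ ∫ p, p.1.1 * p.1.2 ∂T := by
    intro ρ hρ hsnd
    have hρ0 : ρ.snd Sᶜ = 0 := by rw [hsnd, hTS]
    have hbm := measurable_bary ρ
    have hp : IsProbabilityMeasure (ρ.fst.map (bary ρ)) :=
      Measure.isProbabilityMeasure_map hbm.aemeasurable
    have h := hopt (ρ.fst.map (bary ρ)) hp ?_ ?_
    · have hfm : Measurable (fun z : ℝ × ℝ => z.1 * z.2) := by fun_prop
      rw [integral_map hbm.aemeasurable hfm.aestronglyMeasurable, ← hTfst,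
        integral_fst T (fun z => z.1 * z.2) (by fun_prop)] at h
      exact h
    · rw [hXS, ← prob_compl_eq_zero_iff hScomp.measurableSet]
      exact (ae_map_iff (p := fun z => z ∈ S) hbm.aemeasurable hScomp.measurableSet).2
        (bary_mem ρ hScomp hSconv hρ0)
    · intro φ h1 h2
      rw [hXS] at h1 h2
      have := bary_convex ρ hScomp hSconv hρ0 φ h1 h2
      rwa [hsnd, hTsnd] at this
  have hb : ∀ p ∈ T.support, ∀ q ∈ T.support, psi (q.1, p.2) ≤ psi p := by
    intro p hp q hq
    refine supp_ineq T ?_ p q hp hq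
    intro A hA N hN h1 c h2
    exact first_order S hScomp hSconv T hTS M hSM hTM hmart1 hmart2 hopt' A hA N h1 c h2
  have hc : ∀ p ∈ T.support, ∀ q ∈ T.support, psi (q.1, p.1) ≤ psi (p.1, p.1) :=
    fun p hp q hq => supp_mono T M hTm hmart1 hmart2 hb p q hp hq
  have hPS : T.support ⊆ Metric.closedBall 0 M ×ˢ S := by
    refine Measure.support_subset_of_isClosed (Metric.isClosed_closedBall.prod hScomp.isClosed) ?_
    filter_upwards [hTM, ae_snd_mem T hScomp.measurableSet hTS] with p h1 h2
    exact ⟨by simpa using h1, h2⟩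
  have hPθ : T.support ⊆ {p | p.1.2 + a * p.1.1 = p.2.2 + a * p.2.1} := by
    have hcl : IsClosed {p : (ℝ × ℝ) × (ℝ × ℝ) | p.1.2 + a * p.1.1 = p.2.2 + a * p.2.1} :=
      isClosed_eq (by fun_prop) (by fun_prop)
    exact Measure.support_subset_of_isClosed hcl (hTae _ hcl.measurableSet hxθ)
  have hTc : IsCompact T.support :=
    ((isCompact_closedBall _ _).prod hScomp).of_isClosed_subset Measure.isClosed_support hPS
  have hd : ∀ w ∈ S, ∃ y, (y, w) ∈ T.support := by
    intro w hw
    have hK : IsClosed (Prod.snd '' T.support) := (hTc.image continuous_snd).isClosed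
    have hsub : F₀.support ⊆ Prod.snd '' T.support := by
      refine Measure.support_subset_of_isClosed hK ?_
      have h1 : ∀ᵐ v ∂F₀, (x v, v) ∈ T.support :=
        (ae_map_iff (p := fun p => p ∈ T.support) hpair.aemeasurable
          Measure.isClosed_support.measurableSet).1 Measure.support_mem_ae
      filter_upwards [h1] with v hv using ⟨_, hv, rfl⟩
    rw [hsup] at hsub
    obtain ⟨p, hp, rfl⟩ := hsub hw
    exact ⟨p.1, hp⟩
  obtain ⟨b, hbl⟩ := geom S hSconv hSint a ha T.support (fun p hp => (hPS hp).2)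
    (fun p hp => hPθ hp) hb hc hd
  refine ⟨b, ?_⟩
  have hcl : IsClosed {z : ℝ × ℝ | z.2 = a * z.1 + b} := isClosed_eq (by fun_prop) (by fun_prop)
  have hGae : G {z : ℝ × ℝ | z.2 = a * z.1 + b}ᶜ = 0 := by
    rw [← hTfst]
    refine (ae_map_iff (p := fun z : ℝ × ℝ => z.2 = a * z.1 + b) measurable_fst.aemeasurable
      hcl.measurableSet).2 ?_
    filter_upwards [(Measure.support_mem_ae : T.support ∈ ae T)] with p hp using hbl p hp
  intro z hz
  by_contra hzn
  exact hz _ hcl.isOpen_compl hzn hGae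
end

section
/- If μ and η are Borel probability measures on a compact metric space Ω, then for any real number λ, d(μ, λη) ≥ (1/2) d(μ, η), where d is the Kantorovich–Rubinstein distance extended to signed measures. -/
open MeasureTheory

/-- Integral of `f` against a (finite) signed measure, via the Jordan decomposition. -/
noncomputable def signedIntegral {Ω : Type*} [MeasurableSpace Ω]
    (s : SignedMeasure Ω) (f : Ω → ℝ) : ℝ :=
  ∫ ω, f ω ∂s.toJordanDecomposition.posPart - ∫ ω, f ω ∂s.toJordanDecomposition.negPart

/-- The Kantorovich–Rubinstein distance between two finite signed measures:
`d(s, t) = sup {∫ f d(s − t) : f 1-Lipschitz, sup |f| ≤ 1}`. -/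
noncomputable def krDistSigned {Ω : Type*} [MeasurableSpace Ω] [PseudoMetricSpace Ω]
    (s t : SignedMeasure Ω) : ℝ :=
  sSup {r : ℝ | ∃ f : Ω → ℝ, LipschitzWith 1 f ∧ (∀ ω, |f ω| ≤ 1) ∧
    r = signedIntegral (s - t) f}

theorem signedIntegral_eq_sub {Ω : Type*} [MeasurableSpace Ω] (s : SignedMeasure Ω)
    (ν₁ ν₂ : Measure Ω) [IsFiniteMeasure ν₁] [IsFiniteMeasure ν₂]
    (hs : s = ν₁.toSignedMeasure - ν₂.toSignedMeasure) (f : Ω → ℝ)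
    (hf : Measurable f) (hb : ∀ ω, |f ω| ≤ 1) :
    signedIntegral s f = ∫ ω, f ω ∂ν₁ - ∫ ω, f ω ∂ν₂ := by
  have hi : ∀ (ν : Measure Ω) [IsFiniteMeasure ν], Integrable f ν := fun ν _ =>
    Integrable.of_bound hf.aestronglyMeasurable 1 (Filter.Eventually.of_forall hb)
  have h1 := s.toSignedMeasure_toJordanDecomposition
  unfold JordanDecomposition.toSignedMeasure at h1
  have h2 : s.toJordanDecomposition.posPart + ν₂ = ν₁ + s.toJordanDecomposition.negPart := by
    rw [← Measure.toSignedMeasure_eq_toSignedMeasure_iff, Measure.toSignedMeasure_add,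
      Measure.toSignedMeasure_add]
    rw [← sub_eq_sub_iff_add_eq_add, h1, hs]
  have h3 : ∫ ω, f ω ∂(s.toJordanDecomposition.posPart + ν₂)
      = ∫ ω, f ω ∂(ν₁ + s.toJordanDecomposition.negPart) := by rw [h2]
  rw [integral_add_measure (hi _) (hi _), integral_add_measure (hi _) (hi _)] at h3
  unfold signedIntegral
  linarith

theorem signedIntegral_sub_smul {Ω : Type*} [MeasurableSpace Ω]
    (μ η : Measure Ω) [IsProbabilityMeasure μ] [IsProbabilityMeasure η] (lam : ℝ) (f : Ω → ℝ)
    (hf : Measurable f) (hb : ∀ ω, |f ω| ≤ 1) :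
    signedIntegral (μ.toSignedMeasure - lam • η.toSignedMeasure) f
      = ∫ ω, f ω ∂μ - lam * ∫ ω, f ω ∂η := by
  have hi : ∀ (ν : Measure Ω) [IsFiniteMeasure ν], Integrable f ν := fun ν _ =>
    Integrable.of_bound hf.aestronglyMeasurable 1 (Filter.Eventually.of_forall hb)
  have hl : lam = (lam.toNNReal : ℝ) - ((-lam).toNNReal : ℝ) := by
    rw [Real.coe_toNNReal', Real.coe_toNNReal']
    rcases le_total 0 lam with h | h
    · rw [max_eq_left h, max_eq_right (by linarith)]; ring
    · rw [max_eq_right h, max_eq_left (by linarith)]; ring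
  rw [signedIntegral_eq_sub _ (μ + (-lam).toNNReal • η) (lam.toNNReal • η) _ f hf hb]
  · rw [integral_add_measure (hi _) (hi _), integral_smul_nnreal_measure,
      integral_smul_nnreal_measure]
    simp only [NNReal.smul_def, smul_eq_mul]
    nth_rewrite 3 [hl]
    ring
  · rw [Measure.toSignedMeasure_add, Measure.toSignedMeasure_smul, Measure.toSignedMeasure_smul]
    ext i hmeas
    simp only [VectorMeasure.sub_apply, VectorMeasure.add_apply, VectorMeasure.smul_apply,
      NNReal.smul_def, smul_eq_mul]
    nth_rewrite 1 [hl]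
    ring

/-- **Lemma 3**: if `μ` and `η` are Borel probability measures on a compact metric space `Ω`,
then for any real `λ`, `d(μ, λη) ≥ (1/2) d(μ, η)`. -/
theorem krDist_smul_lower_bound
    {Ω : Type*} [MetricSpace Ω] [CompactSpace Ω] [MeasurableSpace Ω] [BorelSpace Ω]
    (μ η : Measure Ω) [IsProbabilityMeasure μ] [IsProbabilityMeasure η] (lam : ℝ) :
    (1 / 2) * krDistSigned μ.toSignedMeasure η.toSignedMeasure
      ≤ krDistSigned μ.toSignedMeasure (lam • η.toSignedMeasure) := by
  have hη : μ.toSignedMeasure - η.toSignedMeasure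
      = μ.toSignedMeasure - (1 : ℝ) • η.toSignedMeasure := by rw [one_smul]
  have habs : ∀ (ν : Measure Ω) [IsProbabilityMeasure ν] (f : Ω → ℝ), (∀ ω, |f ω| ≤ 1) →
      |∫ ω, f ω ∂ν| ≤ 1 := by
    intro ν _ f hb
    have := norm_integral_le_of_norm_le_const (μ := ν) (f := f) (C := 1)
      (Filter.Eventually.of_forall hb)
    simpa using this
  have hbdd : BddAbove {r : ℝ | ∃ f : Ω → ℝ, LipschitzWith 1 f ∧ (∀ ω, |f ω| ≤ 1) ∧
      r = signedIntegral (μ.toSignedMeasure - lam • η.toSignedMeasure) f} := by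
    refine ⟨1 + |lam|, ?_⟩
    rintro r ⟨f, hf, hb, rfl⟩
    rw [signedIntegral_sub_smul μ η lam f hf.continuous.measurable hb]
    have h1 := (abs_le.1 (habs μ f hb)).2
    have h2 : |lam * ∫ ω, f ω ∂η| ≤ |lam| := by
      rw [abs_mul]
      exact mul_le_of_le_one_right (abs_nonneg _) (habs η f hb)
    have h3 := (abs_le.1 h2).1
    linarith
  have key : ∀ f : Ω → ℝ, LipschitzWith 1 f → (∀ ω, |f ω| ≤ 1) →
      ∫ ω, f ω ∂μ - lam * ∫ ω, f ω ∂η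
        ≤ krDistSigned μ.toSignedMeasure (lam • η.toSignedMeasure) := by
    intro f hf hb
    rw [← signedIntegral_sub_smul μ η lam f hf.continuous.measurable hb]
    exact le_csSup hbdd ⟨f, hf, hb, rfl⟩
  have k1 := key (fun _ => 1) (LipschitzWith.const' 1) (by simp)
  have k2 := key (fun _ => -1) (LipschitzWith.const' (-1)) (by simp)
  simp only [integral_const, probReal_univ, smul_eq_mul] at k1 k2
  have k3 : |lam - 1| ≤ krDistSigned μ.toSignedMeasure (lam • η.toSignedMeasure) :=
    abs_le.2 ⟨by linarith, by linarith⟩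
  suffices h : krDistSigned μ.toSignedMeasure η.toSignedMeasure
      ≤ 2 * krDistSigned μ.toSignedMeasure (lam • η.toSignedMeasure) by linarith
  refine csSup_le ⟨_, fun _ => 0, LipschitzWith.const' 0, by simp, rfl⟩ ?_
  rintro r ⟨f, hf, hb, rfl⟩
  rw [hη, signedIntegral_sub_smul μ η 1 f hf.continuous.measurable hb]
  have k := key f hf hb
  have h2 : |(lam - 1) * ∫ ω, f ω ∂η| ≤ |lam - 1| := by
    rw [abs_mul]
    exact mul_le_of_le_one_right (abs_nonneg _) (habs η f hb)
  have h3 := (abs_le.1 h2).2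
  linarith
end
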